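/- arXiv:1503.06982 — 2 statements merged into one kernel-verified Lean document; each statement's English description precedes it below -/
import Mathlib

section
/- Let d1, d2 be natural numbers, Z1(x) the column vector of all monomials x^i with 0 ≤ i ≤ d1, and Z2(x,ξ) the column vector of all monomials x^i ξ^j with i + j ≤ d2. Let U be a symmetric positive semidefinite real matrix with blocks U11, U12, U13, U22, U23, U32, U33 (with U21 = U12ᵀ, U31 = U13ᵀ, U23 = U32ᵀ), and define M(x) = Z1(x)ᵀ U11 Z1(x), K1(x,ξ) = Z1(x)ᵀ U12 Z2(x,ξ) + Z2(ξ,x)ᵀ U31 Z1(ξ) + ∫₀^ξ Z2(η,x)ᵀ U33 Z2(η,ξ) dη + ∫_ξ^x Z2(η,x)ᵀ U32 Z2(η,ξ) dη + ∫_x^1 Z2(η,x)ᵀ U22 Z2(η,ξ) dη, and K2(x,ξ) = K1(ξ,x). Set θ1 = sup over x ∈ [0,1] of Z1(x)ᵀZ1(x), θ2 = sup over (x,ξ) ∈ [0,1]² of |∫₀^ξ Z2(η,x)ᵀZ2(η,ξ)dη + ∫_x^1 Z2(η,x)ᵀZ2(η,ξ)dη|, and let λmax(U) be the largest eigenvalue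 of U. Then for every continuous z : [0,1] → ℝ, the operator P defined by (Pz)(x) = M(x)z(x) + ∫₀^x K1(x,ξ)z(ξ)dξ + ∫_x^1 K2(x,ξ)z(ξ)dξ satisfies ∫₀¹ (Pz)(x) z(x) dx ≤ (θ1 + θ2)·λmax(U)·∫₀¹ z(x)² dx. -/
open MeasureTheory

noncomputable section

/-- Column vector of all monomials `x^i` with `0 ≤ i ≤ d1`. -/
def Z1vec (d1 : ℕ) (x : ℝ) : Fin (d1 + 1) → ℝ := fun i => x ^ (i : ℕ)

/-- Index type for monomials `x^i ξ^j` with `i + j ≤ d2`. -/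
def I2idx (d2 : ℕ) : Type :=
  {p : Fin (d2 + 1) × Fin (d2 + 1) // (p.1 : ℕ) + (p.2 : ℕ) ≤ d2}

instance (d2 : ℕ) : Fintype (I2idx d2) := by unfold I2idx; infer_instance
instance (d2 : ℕ) : DecidableEq (I2idx d2) := by unfold I2idx; infer_instance

/-- Column vector of all monomials `x^i ξ^j` with `i + j ≤ d2`. -/
def Z2vec (d2 : ℕ) (x ξ : ℝ) : I2idx d2 → ℝ :=
  fun p => x ^ (p.1.1 : ℕ) * ξ ^ (p.1.2 : ℕ)

/-!
The operator factors as `P = T* U T`, where `(T z)(η)` stacks `Z1(η) z(η)`,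
`∫₀^η Z2(η, x) z(x) dx` and `∫_η^1 Z2(η, x) z(x) dx`: expanding `∫ (T z)ᵀ U (T z)` by Fubini gives
the multiplier `M` and a kernel that is `K1` below the diagonal and `K2` above it. Pointwise
`(T z)ᵀ U (T z) ≤ λmax (T z)ᵀ (T z)`, and the integral of the right-hand side is the same expansion
at `U = 1`, where the blocks `U32`, `U12`, `U31` vanish; its multiplier is at most `θ1` and its
kernel is at most `θ2` in absolute value, and `(∫ |z|)² ≤ ∫ z²` on the unit interval.
-/

section GramKernel

open Function

variable {X Y E : Type*} [MeasurableSpace X] [MeasurableSpace Y] [NormedAddCommGroup E]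
  {μ : Measure X} {ν : Measure Y}

lemma sq_integral_norm_le_integral_norm_sq [IsProbabilityMeasure μ] {f : X → E}
    (hf : MemLp f 2 μ) : (∫ x, ‖f x‖ ∂μ) ^ 2 ≤ ∫ x, ‖f x‖ ^ 2 ∂μ := by
  have h := ProbabilityTheory.variance_nonneg (fun x => ‖f x‖) μ
  rw [ProbabilityTheory.variance_eq_sub hf.norm] at h
  exact sub_nonneg.1 h

variable [NormedSpace ℝ E]

lemma memLp_two_integral_right [IsProbabilityMeasure μ] [SFinite ν] {b : Y → X → E}
    (hb : MemLp (uncurry b) 2 (ν.prod μ)) : MemLp (fun y => ∫ x, b y x ∂μ) 2 ν := by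
  have hmeas : AEStronglyMeasurable (fun y => ∫ x, b y x ∂μ) ν := hb.1.integral_prod_right'
  have hsq : Integrable (fun p => ‖uncurry b p‖ ^ 2) (ν.prod μ) :=
    (memLp_two_iff_integrable_sq_norm hb.1).1 hb
  refine (memLp_two_iff_integrable_sq_norm hmeas).2
    (hsq.integral_prod_left.mono' (hmeas.norm.pow 2) ?_)
  filter_upwards [hb.1.prodMk_left, hsq.prod_right_ae] with y hy_meas hy_sq
  have hy : MemLp (b y) 2 μ := (memLp_two_iff_integrable_sq_norm hy_meas).2 hy_sq
  calc ‖‖∫ x, b y x ∂μ‖ ^ 2‖ = ‖∫ x, b y x ∂μ‖ ^ 2 := Real.norm_of_nonneg (by positivity)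
    _ ≤ (∫ x, ‖b y x‖ ∂μ) ^ 2 := by gcongr; exact norm_integral_le_integral_norm _
    _ ≤ ∫ x, ‖b y x‖ ^ 2 ∂μ := sq_integral_norm_le_integral_norm_sq hy

lemma integrable_bilin_of_memLp_two (L : E →L[ℝ] E →L[ℝ] ℝ) {f g : X → E}
    (hf : MemLp f 2 μ) (hg : MemLp g 2 μ) : Integrable (fun x => L (f x) (g x)) μ :=
  memLp_one_iff_integrable.1 (L.memLp_of_bilin 1 hf hg)

lemma integrable_bilin_sections [IsProbabilityMeasure μ] [SFinite ν] (L : E →L[ℝ] E →L[ℝ] ℝ)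
    {b : Y → X → E} (hb : MemLp (uncurry b) 2 (ν.prod μ)) :
    Integrable (fun q : Y × X × X => L (b q.1 q.2.1) (b q.1 q.2.2)) (ν.prod (μ.prod μ)) :=
  integrable_bilin_of_memLp_two L
    (hb.comp_measurePreserving ((MeasurePreserving.id ν).prod measurePreserving_fst))
    (hb.comp_measurePreserving ((MeasurePreserving.id ν).prod measurePreserving_snd))

lemma integral_bilin_integral_right [CompleteSpace E] [IsFiniteMeasure μ] [IsFiniteMeasure ν]
    (L : E →L[ℝ] E →L[ℝ] ℝ) {a : Y → E} {b : Y → X → E} (ha : MemLp a 2 ν)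
    (hb : MemLp (uncurry b) 2 (ν.prod μ)) :
    ∫ y, L (a y) (∫ x, b y x ∂μ) ∂ν = ∫ p, L (a p.1) (b p.1 p.2) ∂ν.prod μ := by
  have hab := integrable_bilin_of_memLp_two L (ha.comp_fst μ) hb
  refine Eq.trans (integral_congr_ae ?_) (integral_prod _ hab).symm
  filter_upwards [(hb.integrable one_le_two).prod_right_ae] with y hy
    using ((L (a y)).integral_comp_comm hy).symm

lemma integral_bilin_integral_integral [CompleteSpace E] [IsProbabilityMeasure μ]
    [IsFiniteMeasure ν] (L : E →L[ℝ] E →L[ℝ] ℝ) {b : Y → X → E}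
    (hb : MemLp (uncurry b) 2 (ν.prod μ)) :
    ∫ y, L (∫ x, b y x ∂μ) (∫ x, b y x ∂μ) ∂ν
      = ∫ p, (∫ y, L (b y p.1) (b y p.2) ∂ν) ∂μ.prod μ := by
  rw [← integral_integral_swap (integrable_bilin_sections L hb)]
  refine integral_congr_ae ?_
  filter_upwards [(hb.integrable one_le_two).prod_right_ae] with y hy
    using (integral_prod_bilin L hy hy).symm

/-- The kernel of the integral part of `T* L T`, where `T z = a z + ∫ b(·, x) z(x) dμ(x)` is the sum
of a multiplication operator and an integral operator with values in `E`, and the bilinear form `L`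
on `E` pairs the two copies of `T`. -/
def gramKernel (μ : Measure X) (L : E →L[ℝ] E →L[ℝ] ℝ) (a : X → E) (b : X → X → E) (x ξ : X) : ℝ :=
  L (a x) (b x ξ) + L (b ξ x) (a ξ) + ∫ η, L (b η x) (b η ξ) ∂μ

variable {L Q : E →L[ℝ] E →L[ℝ] ℝ} {a : X → E} {b : X → X → E}

lemma gramKernel_comm (hL : ∀ u v, L u v = L v u) (x ξ : X) :
    gramKernel μ L a b x ξ = gramKernel μ L a b ξ x := by
  simp only [gramKernel, hL (a x), hL (b ξ x), hL (b _ x)]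
  ring

lemma gramKernel_smul (z : X → ℝ) (x ξ : X) :
    gramKernel μ L (fun x => z x • a x) (fun η x => z x • b η x) x ξ
      = z x * z ξ * gramKernel μ L a b x ξ := by
  simp only [gramKernel, map_smul, smul_apply, smul_eq_mul, integral_const_mul]
  ring

variable {z : X → ℝ} {θ : ℝ}

lemma integral_bilin_smul_self_le (hz : MemLp z 2 μ)
    (ha : Integrable (fun x => L (z x • a x) (z x • a x)) μ)
    (hθ : ∀ᵐ x ∂μ, L (a x) (a x) ≤ θ) :
    ∫ x, L (z x • a x) (z x • a x) ∂μ ≤ θ * ∫ x, z x ^ 2 ∂μ := by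
  rw [← integral_const_mul]
  refine integral_mono_ae ha (hz.integrable_sq.const_mul θ) ?_
  filter_upwards [hθ] with x hx
  simp only [map_smul, smul_apply, smul_eq_mul]
  nlinarith [sq_nonneg (z x)]

variable [IsProbabilityMeasure μ]

lemma integrable_gramKernel (ha : MemLp a 2 μ) (hb : MemLp (uncurry b) 2 (μ.prod μ)) :
    Integrable (uncurry (gramKernel μ L a b)) (μ.prod μ) := by
  have hab := integrable_bilin_of_memLp_two L (ha.comp_fst μ) hb
  have hba := integrable_bilin_of_memLp_two L hb (ha.comp_fst μ)
  exact (hab.add hba.swap).add (integrable_bilin_sections L hb).integral_prod_right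

theorem integral_bilin_add_integral [CompleteSpace E] (ha : MemLp a 2 μ)
    (hb : MemLp (uncurry b) 2 (μ.prod μ)) :
    ∫ η, L (a η + ∫ x, b η x ∂μ) (a η + ∫ x, b η x ∂μ) ∂μ
      = ∫ x, L (a x) (a x) ∂μ + ∫ p, gramKernel μ L a b p.1 p.2 ∂μ.prod μ := by
  have hB := memLp_two_integral_right hb
  have haa := integrable_bilin_of_memLp_two L ha ha
  have haB := integrable_bilin_of_memLp_two L ha hB
  have hBa := integrable_bilin_of_memLp_two L hB ha
  have hBB := integrable_bilin_of_memLp_two L hB hB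
  have hab : Integrable (fun p : X × X => L (a p.1) (b p.1 p.2)) (μ.prod μ) :=
    integrable_bilin_of_memLp_two L (ha.comp_fst μ) hb
  have hba : Integrable (fun p : X × X => L (b p.2 p.1) (a p.2)) (μ.prod μ) :=
    (integrable_bilin_of_memLp_two L hb (ha.comp_fst μ)).swap
  have hbb : Integrable (fun p : X × X => ∫ η, L (b η p.1) (b η p.2) ∂μ) (μ.prod μ) :=
    (integrable_bilin_sections L hb).integral_prod_right
  have left_integral : ∫ η, L (∫ x, b η x ∂μ) (a η) ∂μ = ∫ p, L (b p.2 p.1) (a p.2) ∂μ.prod μ :=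
    (integral_bilin_integral_right L.flip ha hb).trans
      (integral_prod_swap fun p : X × X => L (b p.1 p.2) (a p.1)).symm
  simp only [map_add, add_apply, gramKernel]
  rw [integral_add (haa.fun_add hBa) (haB.fun_add hBB), integral_add haa hBa, integral_add haB hBB,
    integral_add (hab.fun_add hba) hbb, integral_add hab hba,
    integral_bilin_integral_right L ha hb, left_integral, integral_bilin_integral_integral L hb]
  ring

lemma integral_mul_kernel_le {G : X × X → ℝ} (hz : MemLp z 2 μ)
    (hG : ∀ᵐ p ∂μ.prod μ, |G p| ≤ θ) :
    ∫ p, z p.1 * z p.2 * G p ∂μ.prod μ ≤ θ * ∫ x, z x ^ 2 ∂μ := by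
  have hθ0 : 0 ≤ θ := let ⟨p, hp⟩ := hG.exists; (abs_nonneg (G p)).trans hp
  have hz_abs : Integrable (fun x => ‖z x‖) μ := (hz.integrable one_le_two).norm
  calc ∫ p, z p.1 * z p.2 * G p ∂μ.prod μ
      ≤ ∫ p, ‖z p.1‖ * ‖z p.2‖ * θ ∂μ.prod μ := by
        refine (Real.le_norm_self _).trans (norm_integral_le_of_norm_le
          ((hz_abs.mul_prod hz_abs).mul_const θ) ?_)
        filter_upwards [hG] with p hp
        rw [norm_mul, norm_mul]
        gcongr
        exact hp
    _ = θ * (∫ x, ‖z x‖ ∂μ) ^ 2 := by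
        rw [integral_mul_const, integral_prod_mul (fun x => ‖z x‖) fun x => ‖z x‖]
        ring
    _ ≤ θ * ∫ x, z x ^ 2 ∂μ := by
        gcongr
        simpa using sq_integral_norm_le_integral_norm_sq hz

theorem integral_bilin_add_integral_gramKernel_le [CompleteSpace E] {lam θ1 θ2 : ℝ}
    (hLQ : ∀ v, L v v ≤ lam * Q v v) (hlam : 0 ≤ lam) (ha : MemLp a ⊤ μ)
    (hb : MemLp (uncurry b) ⊤ (μ.prod μ)) (hθ1 : ∀ᵐ x ∂μ, Q (a x) (a x) ≤ θ1)
    (hθ2 : ∀ᵐ p ∂μ.prod μ, |gramKernel μ Q a b p.1 p.2| ≤ θ2) (hz : MemLp z 2 μ) :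
    ∫ x, L (z x • a x) (z x • a x) ∂μ + ∫ p, z p.1 * z p.2 * gramKernel μ L a b p.1 p.2 ∂μ.prod μ
      ≤ (θ1 + θ2) * lam * ∫ x, z x ^ 2 ∂μ := by
  have hza : MemLp (fun x => z x • a x) 2 μ := ha.smul hz
  have hzb : MemLp (uncurry fun η x => z x • b η x) 2 (μ.prod μ) := hb.smul (hz.comp_snd μ)
  have hT := hza.add (memLp_two_integral_right hzb)
  have factorization (B : E →L[ℝ] E →L[ℝ] ℝ) := integral_bilin_add_integral (L := B) hza hzb
  simp only [gramKernel_smul] at factorization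
  calc ∫ x, L (z x • a x) (z x • a x) ∂μ
          + ∫ p, z p.1 * z p.2 * gramKernel μ L a b p.1 p.2 ∂μ.prod μ
      ≤ lam * (∫ x, Q (z x • a x) (z x • a x) ∂μ
          + ∫ p, z p.1 * z p.2 * gramKernel μ Q a b p.1 p.2 ∂μ.prod μ) := by
        rw [← factorization, ← factorization, ← integral_const_mul]
        exact integral_mono (integrable_bilin_of_memLp_two L hT hT)
          ((integrable_bilin_of_memLp_two Q hT hT).const_mul lam) fun _ => hLQ _
    _ ≤ lam * (θ1 * ∫ x, z x ^ 2 ∂μ + θ2 * ∫ x, z x ^ 2 ∂μ) := by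
        gcongr
        · exact integral_bilin_smul_self_le hz (integrable_bilin_of_memLp_two Q hza hza) hθ1
        · exact integral_mul_kernel_le hz hθ2
    _ = (θ1 + θ2) * lam * ∫ x, z x ^ 2 ∂μ := by ring

end GramKernel

section MatrixForm

variable {n : Type*} [Fintype n] [DecidableEq n] {U : Matrix n n ℝ}

/-- The bilinear form `(v, w) ↦ vᵀ U w` of a square real matrix. -/
def matrixForm (U : Matrix n n ℝ) : (n → ℝ) →L[ℝ] (n → ℝ) →L[ℝ] ℝ :=
  (Matrix.toBilin' U).toContinuousBilinearMap

lemma matrixForm_eq_dotProduct (v w : n → ℝ) : matrixForm U v w = v ⬝ᵥ U.mulVec w :=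
  Matrix.toBilin'_apply' U v w

lemma matrixForm_eq_sum (v w : n → ℝ) : matrixForm U v w = ∑ i, ∑ j, v i * U i j * w j :=
  Matrix.toBilin'_apply U v w

lemma matrixForm_comm (hU : U.IsHermitian) (v w : n → ℝ) :
    matrixForm U v w = matrixForm U w v := by
  have hUT : U.transpose = U := hU
  rw [matrixForm_eq_dotProduct, matrixForm_eq_dotProduct, Matrix.dotProduct_mulVec,
    ← Matrix.mulVec_transpose, hUT, dotProduct_comm]

open scoped MatrixOrder in
lemma matrixForm_le_of_eigenvalues_le {lam : ℝ} (hU : U.IsHermitian)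
    (hlam : ∀ i, hU.eigenvalues i ≤ lam) (v : n → ℝ) :
    matrixForm U v v ≤ lam * matrixForm 1 v v := by
  have hle : U ≤ algebraMap ℝ (Matrix n n ℝ) lam := by
    refine le_algebraMap_of_spectrum_le (fun r hr => ?_) hU
    obtain ⟨i, rfl⟩ := hU.spectrum_real_eq_range_eigenvalues ▸ hr
    exact hlam i
  have hnonneg := (Matrix.le_iff.1 hle).dotProduct_mulVec_nonneg v
  simpa [matrixForm_eq_dotProduct, Algebra.algebraMap_eq_smul_one, Matrix.sub_mulVec,
    Matrix.smul_mulVec] using hnonneg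

end MatrixForm

section BoundedOnCompact

open Set

lemma memLp_top_restrict_of_continuous {S E : Type*} [TopologicalSpace S] [MeasurableSpace S]
    [OpensMeasurableSpace S] [T2Space S] [NormedAddCommGroup E] [SecondCountableTopologyEither S E]
    {μ : Measure S} {t K : Set S} {f : S → E} (hf : Continuous f) (hK : IsCompact K)
    (htK : t ⊆ K) : MemLp f ⊤ (μ.restrict t) := by
  obtain ⟨C, hC⟩ := hK.exists_bound_of_continuousOn hf.continuousOn
  exact memLp_top_of_bound hf.aestronglyMeasurable C
    (ae_restrict_of_ae_restrict_of_subset htK (ae_restrict_of_forall_mem hK.measurableSet hC))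

lemma le_ciSup_mem_of_bddAbove {S : Type*} {s : Set S} {f : S → ℝ} (hf : BddAbove (f '' s)) {x : S}
    (hx : x ∈ s) : f x ≤ ⨆ y ∈ s, f y := by
  refine le_ciSup₂ (f := fun y (_ : y ∈ s) => f y) (hf.mono (iUnion_subset ?_)) x hx
  rintro y _ ⟨hy, rfl⟩
  exact mem_image_of_mem f hy

lemma le_ciSup_mem_ciSup_mem_of_bddAbove {S T : Type*} {s : Set S} {t : Set T} {f : S → T → ℝ}
    (hf : BddAbove ((fun p : S × T => f p.1 p.2) '' s ×ˢ t)) {x : S} (hx : x ∈ s) {y : T}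
    (hy : y ∈ t) : f x y ≤ ⨆ x ∈ s, ⨆ y ∈ t, f x y := by
  obtain ⟨C, hC⟩ := hf
  have hfC {x : S} {y : T} (hx : x ∈ s) (hy : y ∈ t) : f x y ≤ C :=
    hC (mem_image_of_mem _ (mk_mem_prod hx hy))
  have inner_bdd : BddAbove (f x '' t) := ⟨C, forall_mem_image.2 fun _ => hfC hx⟩
  have outer_bdd : BddAbove ((fun x => ⨆ y ∈ t, f x y) '' s) :=
    ⟨max C 0, forall_mem_image.2 fun x hx => Real.iSup_le
      (fun y => Real.iSup_le (fun hy => le_max_of_le_left (hfC hx hy)) (le_max_right C 0))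
      (le_max_right C 0)⟩
  exact (le_ciSup_mem_of_bddAbove inner_bdd hy).trans (le_ciSup_mem_of_bddAbove outer_bdd hx)

end BoundedOnCompact

section UnitInterval

open Set Function

lemma intervalIntegral_eq_add_of_eqOn_Ioo {f g h : ℝ → ℝ} {a b c : ℝ} (hab : a ≤ b) (hbc : b ≤ c)
    (hf : IntervalIntegrable f volume a c) (hg : EqOn f g (Ioo a b)) (hh : EqOn f h (Ioo b c)) :
    ∫ x in a..c, f x = (∫ x in a..b, g x) + ∫ x in b..c, h x := by
  have hb : b ∈ uIcc a c := mem_uIcc_of_le hab hbc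
  rw [← intervalIntegral.integral_add_adjacent_intervals
      (hf.mono_set (uIcc_subset_uIcc_left hb)) (hf.mono_set (uIcc_subset_uIcc_right hb)),
    intervalIntegral.integral_congr_Ioo_of_le hab hg,
    intervalIntegral.integral_congr_Ioo_of_le hbc hh]

/-- Lebesgue measure on the unit interval, restricted to `Ioc` because that is the set over which
`∫ x in 0..1, f x` integrates. -/
abbrev unitVolume : Measure ℝ := volume.restrict (Ioc 0 1)

instance : IsProbabilityMeasure unitVolume := ⟨by simp⟩

lemma integral_unitVolume (f : ℝ → ℝ) : ∫ x, f x ∂unitVolume = ∫ x in (0 : ℝ)..1, f x :=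
  (intervalIntegral.integral_of_le zero_le_one).symm

lemma ae_unitVolume_prod_mem_ne :
    ∀ᵐ p ∂unitVolume.prod unitVolume, p.1 ∈ Ioc (0 : ℝ) 1 ∧ p.2 ∈ Ioc (0 : ℝ) 1 ∧ p.1 ≠ p.2 := by
  have hmeas : MeasurableSet {p : ℝ × ℝ | p.1 ∈ Ioc (0 : ℝ) 1 ∧ p.2 ∈ Ioc (0 : ℝ) 1 ∧ p.1 ≠ p.2} :=
    (measurable_fst measurableSet_Ioc).inter ((measurable_snd measurableSet_Ioc).inter
      (measurableSet_eq_fun measurable_fst measurable_snd).compl)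
  refine (Measure.ae_prod_iff_ae_ae hmeas).2 ?_
  filter_upwards [ae_restrict_mem measurableSet_Ioc] with x hx
  filter_upwards [ae_restrict_mem measurableSet_Ioc, Measure.ae_ne _ x] with ξ hξ hne
    using ⟨hx, hξ, hne.symm⟩

lemma integral_triangular_kernels_mul_eq {M z : ℝ → ℝ} {K1 K2 G : ℝ → ℝ → ℝ}
    (hM : Integrable (fun x => M x * z x ^ 2) unitVolume)
    (hG : Integrable (fun p => z p.1 * z p.2 * G p.1 p.2) (unitVolume.prod unitVolume))
    (hK1 : ∀ ⦃x ξ⦄, 0 < ξ → ξ < x → x ≤ 1 → G x ξ = K1 x ξ)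
    (hK2 : ∀ ⦃x ξ⦄, 0 < x → x < ξ → ξ ≤ 1 → G x ξ = K2 x ξ) :
    ∫ x in (0 : ℝ)..1, (M x * z x + (∫ ξ in (0 : ℝ)..x, K1 x ξ * z ξ)
        + ∫ ξ in x..(1 : ℝ), K2 x ξ * z ξ) * z x
      = (∫ x, M x * z x ^ 2 ∂unitVolume)
        + ∫ p, z p.1 * z p.2 * G p.1 p.2 ∂unitVolume.prod unitVolume := by
  rw [integral_prod _ hG, ← integral_add hM hG.integral_prod_left, ← integral_unitVolume]
  refine integral_congr_ae ?_
  filter_upwards [hG.prod_right_ae, ae_restrict_mem measurableSet_Ioc] with x hGx ⟨hx0, hx1⟩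
  have split : ∫ ξ, z x * z ξ * G x ξ ∂unitVolume
      = (∫ ξ in (0 : ℝ)..x, K1 x ξ * z ξ * z x) + ∫ ξ in x..(1 : ℝ), K2 x ξ * z ξ * z x := by
    rw [integral_unitVolume]
    refine intervalIntegral_eq_add_of_eqOn_Ioo hx0.le hx1
      ((intervalIntegrable_iff_integrableOn_Ioc_of_le zero_le_one).2 hGx) ?_ ?_
    · intro ξ hξ
      simp only [hK1 hξ.1 hξ.2 hx1]
      ring
    · intro ξ hξ
      simp only [hK2 hx0 hξ.1 hξ.2.le]
      ring
  rw [split, intervalIntegral.integral_mul_const, intervalIntegral.integral_mul_const]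
  ring

end UnitInterval

section SemiSeparable

open Set Function

variable {ι κ : Type*}

/-- The vector with blocks `(v, 0, 0)`. -/
def firstBlock (v : ι → ℝ) : ι ⊕ κ ⊕ κ → ℝ := Sum.elim v 0

/-- The vector with blocks `(0, v, 0)`. -/
def secondBlock (v : κ → ℝ) : ι ⊕ κ ⊕ κ → ℝ := Sum.elim 0 (Sum.elim v 0)

/-- The vector with blocks `(0, 0, v)`. -/
def thirdBlock (v : κ → ℝ) : ι ⊕ κ ⊕ κ → ℝ := Sum.elim 0 (Sum.elim 0 v)

lemma continuous_firstBlock : Continuous (firstBlock : (ι → ℝ) → ι ⊕ κ ⊕ κ → ℝ) :=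
  continuous_pi <| by
    rintro (i | p | p) <;> simp only [firstBlock, Sum.elim_inl, Sum.elim_inr] <;> fun_prop

lemma continuous_secondBlock : Continuous (secondBlock : (κ → ℝ) → ι ⊕ κ ⊕ κ → ℝ) :=
  continuous_pi <| by
    rintro (i | p | p) <;> simp only [secondBlock, Sum.elim_inl, Sum.elim_inr] <;> fun_prop

lemma continuous_thirdBlock : Continuous (thirdBlock : (κ → ℝ) → ι ⊕ κ ⊕ κ → ℝ) :=
  continuous_pi <| by
    rintro (i | p | p) <;> simp only [thirdBlock, Sum.elim_inl, Sum.elim_inr] <;> fun_prop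

/-- The kernel of the integral part of `T`, where `P = T* U T`: since `(T z)(η)` has second block
`∫₀^η Z2(η, x) z(x) dx` and third block `∫_η^1 Z2(η, x) z(x) dx`, the value `Z2(η, x)` moves from
the second to the third block as `x` passes `η`. -/
def kernelFeature (Z2 : ℝ → ℝ → κ → ℝ) (η x : ℝ) : ι ⊕ κ ⊕ κ → ℝ :=
  if x < η then secondBlock (Z2 η x) else thirdBlock (Z2 η x)

lemma kernelFeature_of_lt {Z2 : ℝ → ℝ → κ → ℝ} {η x : ℝ} (h : x < η) :
    kernelFeature (ι := ι) Z2 η x = secondBlock (Z2 η x) := if_pos h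

lemma kernelFeature_of_le {Z2 : ℝ → ℝ → κ → ℝ} {η x : ℝ} (h : η ≤ x) :
    kernelFeature (ι := ι) Z2 η x = thirdBlock (Z2 η x) := if_neg h.not_gt

/-- The integral of `Z2(η, x)ᵀ Z2(η, ξ)` over the `η ∈ [0, 1]` that do not lie between `ξ` and `x`,
when `ξ ≤ x`. -/
def outerGram [Fintype κ] (Z2 : ℝ → ℝ → κ → ℝ) (x ξ : ℝ) : ℝ :=
  (∫ η in (0 : ℝ)..ξ, Z2 η x ⬝ᵥ Z2 η ξ) + ∫ η in x..(1 : ℝ), Z2 η x ⬝ᵥ Z2 η ξ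

variable [Fintype ι] [Fintype κ] {Z1 : ℝ → ι → ℝ} {Z2 : ℝ → ℝ → κ → ℝ}

lemma memLp_top_firstBlock (hZ1 : Continuous Z1) :
    MemLp (fun x => firstBlock (κ := κ) (Z1 x)) ⊤ unitVolume :=
  memLp_top_restrict_of_continuous (continuous_firstBlock.comp hZ1) isCompact_Icc
    Ioc_subset_Icc_self

lemma memLp_top_uncurry_kernelFeature (hZ2 : Continuous (uncurry Z2)) :
    MemLp (uncurry (kernelFeature (ι := ι) Z2)) ⊤ (unitVolume.prod unitVolume) := by
  rw [Measure.prod_restrict]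
  have memLp_top_of_continuous {f : ℝ × ℝ → ι ⊕ κ ⊕ κ → ℝ} (hf : Continuous f) :
      MemLp f ⊤ ((volume.prod volume).restrict (Ioc (0 : ℝ) 1 ×ˢ Ioc (0 : ℝ) 1)) :=
    memLp_top_restrict_of_continuous hf (isCompact_Icc.prod isCompact_Icc)
      (prod_mono Ioc_subset_Icc_self Ioc_subset_Icc_self)
  exact .piecewise (s := {p : ℝ × ℝ | p.2 < p.1}) (measurableSet_lt measurable_snd measurable_fst)
    ((memLp_top_of_continuous (continuous_secondBlock.comp hZ2)).restrict _)
    ((memLp_top_of_continuous (continuous_thirdBlock.comp hZ2)).restrict _)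

lemma memLp_top_kernelFeature_left (hZ2 : Continuous (uncurry Z2)) (x : ℝ) :
    MemLp (fun η => kernelFeature (ι := ι) Z2 η x) ⊤ unitVolume := by
  have memLp_top_of_continuous {f : ℝ → ι ⊕ κ ⊕ κ → ℝ} (hf : Continuous f) :
      MemLp f ⊤ unitVolume :=
    memLp_top_restrict_of_continuous hf isCompact_Icc Ioc_subset_Icc_self
  have hZ2x : Continuous fun η => Z2 η x := hZ2.comp (.prodMk_left x)
  exact .piecewise (s := {η : ℝ | x < η}) measurableSet_Ioi
    ((memLp_top_of_continuous (continuous_secondBlock.comp hZ2x)).restrict _)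
    ((memLp_top_of_continuous (continuous_thirdBlock.comp hZ2x)).restrict _)

lemma continuous_outerGram (hZ2 : Continuous (uncurry Z2)) :
    Continuous (uncurry (outerGram Z2)) := by
  have hdot : Continuous fun q : (ℝ × ℝ) × ℝ => Z2 q.2 q.1.1 ⬝ᵥ Z2 q.2 q.1.2 :=
    .dotProduct (hZ2.comp (continuous_snd.prodMk continuous_fst.fst))
      (hZ2.comp (continuous_snd.prodMk continuous_fst.snd))
  have continuous_integral_to {c : ℝ} {s : ℝ × ℝ → ℝ} (hs : Continuous s) :
      Continuous fun p : ℝ × ℝ => ∫ η in c..s p, Z2 η p.1 ⬝ᵥ Z2 η p.2 :=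
    intervalIntegral.continuous_parametric_intervalIntegral_of_continuous hdot hs
  simp only [uncurry_def, outerGram, intervalIntegral.integral_symm 1]
  exact (continuous_integral_to continuous_snd).add (continuous_integral_to continuous_fst).neg

lemma abs_outerGram_le_ciSup (hZ2 : Continuous (uncurry Z2)) {x ξ : ℝ} (hx : x ∈ Icc (0 : ℝ) 1)
    (hξ : ξ ∈ Icc (0 : ℝ) 1) :
    |outerGram Z2 x ξ| ≤ ⨆ x ∈ Icc (0 : ℝ) 1, ⨆ ξ ∈ Icc (0 : ℝ) 1, |outerGram Z2 x ξ| :=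
  le_ciSup_mem_ciSup_mem_of_bddAbove (f := fun x ξ => |outerGram Z2 x ξ|)
    ((isCompact_Icc.prod isCompact_Icc).bddAbove_image (continuous_outerGram hZ2).abs.continuousOn)
    hx hξ

lemma dotProduct_self_le_ciSup (hZ1 : Continuous Z1) {x : ℝ} (hx : x ∈ Icc (0 : ℝ) 1) :
    Z1 x ⬝ᵥ Z1 x ≤ ⨆ x ∈ Icc (0 : ℝ) 1, Z1 x ⬝ᵥ Z1 x :=
  le_ciSup_mem_of_bddAbove (f := fun x => Z1 x ⬝ᵥ Z1 x)
    (isCompact_Icc.bddAbove_image (hZ1.dotProduct hZ1).continuousOn) hx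

variable (U : Matrix (ι ⊕ κ ⊕ κ) (ι ⊕ κ ⊕ κ) ℝ)

/-- The multiplier `M(x) = Z1(x)ᵀ U11 Z1(x)` of the operator `P = T* U T`. -/
def semiseparableMultiplier (Z1 : ℝ → ι → ℝ) (x : ℝ) : ℝ :=
  ∑ i, ∑ j, Z1 x i * U (.inl i) (.inl j) * Z1 x j

/-- The kernel `K1` of the operator `P = T* U T`, which agrees with the full kernel of `P` for
`ξ < x`. -/
def semiseparableKernel (Z1 : ℝ → ι → ℝ) (Z2 : ℝ → ℝ → κ → ℝ) (x ξ : ℝ) : ℝ :=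
  (∑ i, ∑ p, Z1 x i * U (.inl i) (.inr (.inl p)) * Z2 x ξ p)
    + (∑ p, ∑ i, Z2 ξ x p * U (.inr (.inr p)) (.inl i) * Z1 ξ i)
    + (∫ η in (0 : ℝ)..ξ, ∑ p, ∑ q, Z2 η x p * U (.inr (.inr p)) (.inr (.inr q)) * Z2 η ξ q)
    + (∫ η in ξ..x, ∑ p, ∑ q, Z2 η x p * U (.inr (.inr p)) (.inr (.inl q)) * Z2 η ξ q)
    + (∫ η in x..(1 : ℝ), ∑ p, ∑ q, Z2 η x p * U (.inr (.inl p)) (.inr (.inl q)) * Z2 η ξ q)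

variable {U} [DecidableEq ι] [DecidableEq κ]

lemma semiseparableKernel_one (x ξ : ℝ) :
    semiseparableKernel 1 Z1 Z2 x ξ = outerGram Z2 x ξ := by
  simp [semiseparableKernel, outerGram, Matrix.one_apply, dotProduct]

lemma matrixForm_firstBlock (x : ℝ) :
    matrixForm U (firstBlock (Z1 x)) (firstBlock (Z1 x))
      = semiseparableMultiplier U Z1 x := by
  simp [matrixForm_eq_sum, firstBlock, semiseparableMultiplier]

lemma integral_matrixForm_kernelFeature (hZ2 : Continuous (uncurry Z2)) {x ξ : ℝ} (hξ : 0 ≤ ξ)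
    (hξx : ξ ≤ x) (hx : x ≤ 1) :
    ∫ η, matrixForm U (kernelFeature Z2 η x) (kernelFeature Z2 η ξ) ∂unitVolume
      = (∫ η in (0 : ℝ)..ξ, ∑ p, ∑ q, Z2 η x p * U (.inr (.inr p)) (.inr (.inr q)) * Z2 η ξ q)
        + (∫ η in ξ..x, ∑ p, ∑ q, Z2 η x p * U (.inr (.inr p)) (.inr (.inl q)) * Z2 η ξ q)
        + ∫ η in x..(1 : ℝ), ∑ p, ∑ q, Z2 η x p * U (.inr (.inl p)) (.inr (.inl q)) * Z2 η ξ q := by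
  have hint : IntervalIntegrable
      (fun η => matrixForm U (kernelFeature Z2 η x) (kernelFeature Z2 η ξ)) volume 0 1 :=
    (intervalIntegrable_iff_integrableOn_Ioc_of_le zero_le_one).2
      (integrable_bilin_of_memLp_two _ ((memLp_top_kernelFeature_left hZ2 x).mono_exponent le_top)
        ((memLp_top_kernelFeature_left hZ2 ξ).mono_exponent le_top))
  have hξ1 : ξ ≤ 1 := hξx.trans hx
  rw [integral_unitVolume, add_assoc, ← intervalIntegral_eq_add_of_eqOn_Ioo hξx hx
    (f := fun η => matrixForm U (kernelFeature Z2 η x) (kernelFeature Z2 η ξ))]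
  · refine intervalIntegral_eq_add_of_eqOn_Ioo hξ hξ1 hint (fun η hη => ?_) fun _ _ => rfl
    simp [kernelFeature_of_le (hη.2.le.trans hξx), kernelFeature_of_le hη.2.le, thirdBlock,
      matrixForm_eq_sum]
  · exact hint.mono_set (uIcc_subset_uIcc_right (mem_uIcc_of_le hξ hξ1))
  · intro η hη
    simp [kernelFeature_of_le hη.2.le, kernelFeature_of_lt hη.1, secondBlock, thirdBlock,
      matrixForm_eq_sum]
  · intro η hη
    simp [kernelFeature_of_lt hη.1, kernelFeature_of_lt (hξx.trans_lt hη.1), secondBlock,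
      matrixForm_eq_sum]

lemma gramKernel_feature_of_lt (hZ2 : Continuous (uncurry Z2)) {x ξ : ℝ} (hξ : 0 ≤ ξ)
    (hξx : ξ < x) (hx : x ≤ 1) :
    gramKernel unitVolume (matrixForm U) (fun x => firstBlock (Z1 x)) (kernelFeature Z2) x ξ
      = semiseparableKernel U Z1 Z2 x ξ := by
  have upper : matrixForm U (firstBlock (Z1 x)) (kernelFeature Z2 x ξ)
      = ∑ i, ∑ p, Z1 x i * U (.inl i) (.inr (.inl p)) * Z2 x ξ p := by
    simp [kernelFeature_of_lt hξx, firstBlock, secondBlock, matrixForm_eq_sum]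
  have lower : matrixForm U (kernelFeature Z2 ξ x) (firstBlock (Z1 ξ))
      = ∑ p, ∑ i, Z2 ξ x p * U (.inr (.inr p)) (.inl i) * Z1 ξ i := by
    simp [kernelFeature_of_le hξx.le, firstBlock, thirdBlock, matrixForm_eq_sum]
  rw [gramKernel, upper, lower, integral_matrixForm_kernelFeature hZ2 hξ hξx.le hx]
  simp only [semiseparableKernel, add_assoc]

lemma ae_abs_gramKernel_one_le {θ : ℝ} (hZ2 : Continuous (uncurry Z2))
    (hθ : ∀ ⦃x ξ⦄, 0 < ξ → ξ < x → x ≤ 1 → |outerGram Z2 x ξ| ≤ θ) :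
    ∀ᵐ p ∂unitVolume.prod unitVolume,
      |gramKernel unitVolume (matrixForm 1) (fun x => firstBlock (Z1 x)) (kernelFeature Z2) p.1 p.2|
        ≤ θ := by
  have abs_le_of_lt {x ξ : ℝ} (hξ : 0 < ξ) (hξx : ξ < x) (hx : x ≤ 1) :
      |gramKernel unitVolume (matrixForm 1) (fun x => firstBlock (Z1 x)) (kernelFeature Z2) x ξ|
        ≤ θ := by
    rw [gramKernel_feature_of_lt hZ2 hξ.le hξx hx, semiseparableKernel_one]
    exact hθ hξ hξx hx
  filter_upwards [ae_unitVolume_prod_mem_ne] with p ⟨hx, hξ, hne⟩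
  rcases hne.lt_or_gt with hlt | hlt
  · rw [gramKernel_comm (matrixForm_comm Matrix.isHermitian_one)]
    exact abs_le_of_lt hx.1 hlt hξ.2
  · exact abs_le_of_lt hξ.1 hlt hx.2

theorem integral_semiseparable_operator_mul_eq {z : ℝ → ℝ} (hU : U.IsHermitian)
    (hZ1 : Continuous Z1) (hZ2 : Continuous (uncurry Z2)) (hz : MemLp z 2 unitVolume) :
    ∫ x in (0 : ℝ)..1, (semiseparableMultiplier U Z1 x * z x
        + (∫ ξ in (0 : ℝ)..x, semiseparableKernel U Z1 Z2 x ξ * z ξ)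
        + ∫ ξ in x..(1 : ℝ), semiseparableKernel U Z1 Z2 ξ x * z ξ) * z x
      = (∫ x, matrixForm U (z x • firstBlock (Z1 x)) (z x • firstBlock (Z1 x)) ∂unitVolume)
        + ∫ p, z p.1 * z p.2 * gramKernel unitVolume (matrixForm U) (fun x => firstBlock (Z1 x))
            (kernelFeature Z2) p.1 p.2 ∂unitVolume.prod unitVolume := by
  have hza : MemLp (fun x => z x • firstBlock (κ := κ) (Z1 x)) 2 unitVolume :=
    (memLp_top_firstBlock hZ1).smul hz
  have hzb : MemLp (uncurry fun η x => z x • kernelFeature (ι := ι) Z2 η x) 2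
      (unitVolume.prod unitVolume) := (memLp_top_uncurry_kernelFeature hZ2).smul (hz.comp_snd _)
  have hM := integrable_bilin_of_memLp_two (matrixForm U) hza hza
  have hG := integrable_gramKernel (L := matrixForm U) hza hzb
  have multiplier_eq (x : ℝ) : matrixForm U (z x • firstBlock (Z1 x)) (z x • firstBlock (Z1 x))
      = semiseparableMultiplier U Z1 x * z x ^ 2 := by
    simp only [map_smul, smul_apply, smul_eq_mul, matrixForm_firstBlock]
    ring
  simp only [multiplier_eq, uncurry_def, gramKernel_smul] at hM hG ⊢
  exact integral_triangular_kernels_mul_eq hM hG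
    (fun x ξ hξ hξx hx => gramKernel_feature_of_lt hZ2 hξ.le hξx hx)
    fun x ξ hx hxξ hξ => (gramKernel_comm (matrixForm_comm hU) x ξ).trans
      (gramKernel_feature_of_lt hZ2 hx.le hxξ hξ)

theorem semiseparable_operator_upper_bound_general {θ1 θ2 lam : ℝ} {z : ℝ → ℝ}
    (hU : U.IsHermitian) (hlam : ∀ i, hU.eigenvalues i ≤ lam) (hlam_nonneg : 0 ≤ lam)
    (hZ1 : Continuous Z1) (hZ2 : Continuous (uncurry Z2))
    (hθ1 : ∀ x ∈ Ioc (0 : ℝ) 1, Z1 x ⬝ᵥ Z1 x ≤ θ1)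
    (hθ2 : ∀ ⦃x ξ⦄, 0 < ξ → ξ < x → x ≤ 1 → |outerGram Z2 x ξ| ≤ θ2)
    (hz : MemLp z 2 unitVolume) :
    ∫ x in (0 : ℝ)..1, (semiseparableMultiplier U Z1 x * z x
        + (∫ ξ in (0 : ℝ)..x, semiseparableKernel U Z1 Z2 x ξ * z ξ)
        + ∫ ξ in x..(1 : ℝ), semiseparableKernel U Z1 Z2 ξ x * z ξ) * z x
      ≤ (θ1 + θ2) * lam * ∫ x in (0 : ℝ)..1, z x ^ 2 := by
  rw [integral_semiseparable_operator_mul_eq hU hZ1 hZ2 hz, ← integral_unitVolume]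
  refine integral_bilin_add_integral_gramKernel_le (matrixForm_le_of_eigenvalues_le hU hlam)
    hlam_nonneg (memLp_top_firstBlock hZ1) (memLp_top_uncurry_kernelFeature hZ2)
    (ae_restrict_of_forall_mem measurableSet_Ioc fun x hx => ?_)
    (ae_abs_gramKernel_one_le hZ2 hθ2) hz
  simpa [matrixForm_eq_dotProduct, firstBlock] using hθ1 x hx

end SemiSeparable

lemma continuous_Z1vec (d1 : ℕ) : Continuous (Z1vec d1) :=
  continuous_pi fun i => continuous_pow (i : ℕ)

lemma continuous_uncurry_Z2vec (d2 : ℕ) : Continuous (Function.uncurry (Z2vec d2)) :=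
  continuous_pi fun _ => (continuous_fst.pow _).mul (continuous_snd.pow _)

/-- If `U ⪰ 0` is symmetric, then the semi-separable kernel operator built from
`M`, `K1`, `K2` as in Theorem 1 of the paper satisfies
`⟨P z, z⟩ ≤ (θ1 + θ2) λmax(U) ‖z‖²` for continuous `z`. -/
theorem semiseparable_operator_upper_bound
    (d1 d2 : ℕ)
    (U : Matrix (Fin (d1 + 1) ⊕ I2idx d2 ⊕ I2idx d2)
                (Fin (d1 + 1) ⊕ I2idx d2 ⊕ I2idx d2) ℝ)
    (hUpsd : U.PosSemidef)
    (M : ℝ → ℝ) (K1 K2 : ℝ → ℝ → ℝ)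
    (hM : ∀ x : ℝ, M x = ∑ i, ∑ j,
        Z1vec d1 x i * U (Sum.inl i) (Sum.inl j) * Z1vec d1 x j)
    (hK1 : ∀ x ξ : ℝ, K1 x ξ =
        (∑ i, ∑ p, Z1vec d1 x i * U (Sum.inl i) (Sum.inr (Sum.inl p)) * Z2vec d2 x ξ p)
      + (∑ p, ∑ i, Z2vec d2 ξ x p * U (Sum.inr (Sum.inr p)) (Sum.inl i) * Z1vec d1 ξ i)
      + (∫ η in (0:ℝ)..ξ, ∑ p, ∑ q,
          Z2vec d2 η x p * U (Sum.inr (Sum.inr p)) (Sum.inr (Sum.inr q)) * Z2vec d2 η ξ q)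
      + (∫ η in ξ..x, ∑ p, ∑ q,
          Z2vec d2 η x p * U (Sum.inr (Sum.inr p)) (Sum.inr (Sum.inl q)) * Z2vec d2 η ξ q)
      + (∫ η in x..(1:ℝ), ∑ p, ∑ q,
          Z2vec d2 η x p * U (Sum.inr (Sum.inl p)) (Sum.inr (Sum.inl q)) * Z2vec d2 η ξ q))
    (hK2 : ∀ x ξ : ℝ, K2 x ξ = K1 ξ x)
    (θ1 θ2 lam : ℝ)
    (hθ1 : θ1 = ⨆ x ∈ Set.Icc (0:ℝ) 1, ∑ i, Z1vec d1 x i * Z1vec d1 x i)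
    (hθ2 : θ2 = ⨆ x ∈ Set.Icc (0:ℝ) 1, ⨆ ξ ∈ Set.Icc (0:ℝ) 1,
        |(∫ η in (0:ℝ)..ξ, ∑ p, Z2vec d2 η x p * Z2vec d2 η ξ p)
          + ∫ η in x..(1:ℝ), ∑ p, Z2vec d2 η x p * Z2vec d2 η ξ p|)
    (hlam : lam = ⨆ i, hUpsd.1.eigenvalues i)
    (z : ℝ → ℝ) (hz : Continuous z) :
    (∫ x in (0:ℝ)..1,
        (M x * z x + (∫ ξ in (0:ℝ)..x, K1 x ξ * z ξ)
          + ∫ ξ in x..(1:ℝ), K2 x ξ * z ξ) * z x)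
      ≤ (θ1 + θ2) * lam * ∫ x in (0:ℝ)..1, (z x) ^ 2 := by
  obtain rfl : M = semiseparableMultiplier U (Z1vec d1) := funext hM
  obtain rfl : K1 = semiseparableKernel U (Z1vec d1) (Z2vec d2) := funext₂ hK1
  obtain rfl : K2 = fun x ξ => semiseparableKernel U (Z1vec d1) (Z2vec d2) ξ x := funext₂ hK2
  subst hθ1 hθ2 hlam
  have hz2 : MemLp z 2 unitVolume :=
    (memLp_top_restrict_of_continuous hz isCompact_Icc Set.Ioc_subset_Icc_self).mono_exponent le_top
  exact semiseparable_operator_upper_bound_general hUpsd.1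
    (le_ciSup (Set.finite_range _).bddAbove) (Real.iSup_nonneg hUpsd.eigenvalues_nonneg)
    (continuous_Z1vec d1) (continuous_uncurry_Z2vec d2)
    (fun _ hx => dotProduct_self_le_ciSup (continuous_Z1vec d1) (Set.Ioc_subset_Icc_self hx))
    (fun _ _ hξ hξx hx => abs_outerGram_le_ciSup (continuous_uncurry_Z2vec d2)
      ⟨(hξ.trans hξx).le, hx⟩ ⟨hξ.le, hξx.le.trans hx⟩) hz2

end
end

section
/- (Classical spatial form of Lemma 3, controller synthesis.) Let a, b, c be polynomial functions with a(x) ≥ α > 0 on [0,1], ε1 > 0, and M, K1, K2 polynomial with K2(x,ξ) = K1(ξ,x) and M(x) ≥ ε1 on [0,1]. With P the operator (Pz)(x) = M(x)z(x) + ∫₀^x K1(x,ξ)z(ξ)dξ + ∫_x^1 K2(x,ξ)z(ξ)dξ and T0,…,T6 and the operator T defined as in the dual Linear Operator Inequality, assume T3 ≤ 0 and T4(x) = 0 for all x ∈ [0,1]. Let O1 : [0,1] → ℝ be continuous, O2 ∈ ℝ, v ∈ ℝ, and let Z1 < 0 be a scalar such that μ := −(T5 + T6·M(1)/Z1) > 0.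 Then for every twice continuously differentiable ẑ : [0,1] → ℝ satisfying (i) M'(0)ẑ(0) + M(0)ẑ'(0) + ∫₀¹ ∂K2/∂x(0,ξ)ẑ(ξ)dξ = 0 and (ii) ẑ'(1) = (M(1)/Z1)·ẑ(1) − (O2/Z1)·v, we have 2∫₀¹ [a(x)(Pẑ)''(x) + b(x)(Pẑ)'(x) + c(x)(Pẑ)(x) + O1(x)·v]·ẑ(x) dx ≤ ∫₀¹ (Tẑ)(x)ẑ(x)dx + 2v·∫₀¹ O1(x)ẑ(x)dx − μ·ẑ(1)² − (T6·O2/Z1)·ẑ(1)·v. -/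
open MeasureTheory Real

noncomputable section

/-- `f` is (the restriction of) a polynomial function. -/
def IsPolyFun (f : ℝ → ℝ) : Prop := ∃ p : Polynomial ℝ, ∀ x, f x = p.eval x

/-- `f` is (the restriction of) a polynomial function of two variables. -/
def IsPolyFun2 (f : ℝ → ℝ → ℝ) : Prop :=
  ∃ p : MvPolynomial (Fin 2) ℝ, ∀ x y, f x y = MvPolynomial.eval ![x, y] p

/-- The semi-separable kernel operator
`(Pz)(x) = M(x)z(x) + ∫₀ˣ K1(x,ξ)z(ξ)dξ + ∫ₓ¹ K2(x,ξ)z(ξ)dξ`. -/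
def semisepOp (M : ℝ → ℝ) (K1 K2 : ℝ → ℝ → ℝ) (z : ℝ → ℝ) : ℝ → ℝ :=
  fun x => M x * z x + (∫ ξ in (0:ℝ)..x, K1 x ξ * z ξ)
    + ∫ ξ in x..(1:ℝ), K2 x ξ * z ξ

/-!
Differentiating `P z` under the integral sign (the two kernel contributions on the diagonal cancel
because `K2` is the transpose of `K1`) writes `a (P z)'' + b (P z)' + c (P z)` as a semi-separable
operator applied to `z` plus `a M z'' + (2 a M' + b M) z'`. Pairing with `z`, the adjoint of a
semi-separable operator transposes and exchanges its kernels, which symmetrizes the integral part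
into `T1`, `T2`; integrating the differential part by parts contributes to `T0`, leaves the
boundary terms `T5`, `T6` and their counterparts at `0`, and the dissipation `-2 ∫ a M z'²`.
Since `a M ≥ α ε₁`, Wirtinger's inequality for `z - z 0` bounds the dissipation by
`-(π² / 2) α ε₁ ∫ (z - z 0)²`; expanding the square yields exactly the `α ε₁` terms of `T0`, `T3`
and `T4`.
-/

open Set

section IntervalIntegral

variable {E : Type*} [NormedAddCommGroup E] [NormedSpace ℝ E] {F F' : ℝ → ℝ → E}

theorem hasDerivAt_parametric_intervalIntegral
    (hF : ∀ x t, HasDerivAt (fun y => F y t) (F' x t) x) (hFc : ∀ x, Continuous (F x))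
    (hF'c : Continuous ↿F') (a b x : ℝ) :
    HasDerivAt (fun y => ∫ t in a..b, F y t) (∫ t in a..b, F' x t) x := by
  obtain ⟨C, hC⟩ := ((isCompact_closedBall x 1).prod isCompact_uIcc).exists_bound_of_continuousOn
    (f := ↿F') (s := Metric.closedBall x 1 ×ˢ uIcc a b) hF'c.continuousOn
  refine (intervalIntegral.hasDerivAt_integral_of_dominated_loc_of_deriv_le
    (bound := fun _ => C) (Metric.closedBall_mem_nhds x one_pos)
    (.of_forall fun y => (hFc y).aestronglyMeasurable) ((hFc x).intervalIntegrable a b)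
    (by fun_prop) (.of_forall fun t ht y hy => ?_) intervalIntegrable_const
    (.of_forall fun t _ y _ => hF y t)).2
  exact hC (y, t) ⟨hy, uIoc_subset_uIcc ht⟩

theorem continuous_parametric_intervalIntegral_left (hFc : Continuous ↿F) (b : ℝ) :
    Continuous fun x => ∫ t in x..b, F x t := by
  simp only [intervalIntegral.integral_symm b]
  fun_prop

variable [CompleteSpace E]

theorem hasDerivAt_parametric_primitive
    (hF : ∀ x t, HasDerivAt (fun y => F y t) (F' x t) x)
    (hFc : Continuous ↿F) (hF'c : Continuous ↿F') (a x : ℝ) :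
    HasDerivAt (fun y => ∫ t in a..y, F y t) (F x x + ∫ t in a..x, F' x t) x := by
  have endpoint_deriv (u y : ℝ) : HasDerivAt (fun u => ∫ t in a..u, F y t) (F y u) u :=
    ((show Continuous (F y) by fun_prop).integral_hasStrictDerivAt a u).hasDerivAt
  have param_deriv (u y : ℝ) :
      HasDerivAt (fun y => ∫ t in a..u, F y t) (∫ t in a..u, F' y t) y :=
    hasDerivAt_parametric_intervalIntegral hF (fun y => by fun_prop) hF'c a u y
  have continuous_toSpanSingleton {g : ℝ × ℝ → E} (hg : Continuous g) :
      Continuous fun p => ContinuousLinearMap.toSpanSingleton ℝ (g p) :=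
    (ContinuousLinearMap.toSpanSingletonCLE (𝕜 := ℝ) (E := E)).continuous.comp hg
  have total_deriv := hasStrictFDerivAt_uncurry_coprod (𝕜 := ℝ) (u := (x, x))
    (f := fun u y => ∫ t in a..u, F y t)
    (f₁ := fun u y => .toSpanSingleton ℝ (F y u))
    (f₂ := fun u y => .toSpanSingleton ℝ (∫ t in a..u, F' y t))
    (.of_forall fun p => endpoint_deriv p.1 p.2) (.of_forall fun p => param_deriv p.1 p.2)
    (continuous_toSpanSingleton (g := fun p => F p.2 p.1) (by fun_prop)).continuousAt
    (continuous_toSpanSingleton (g := fun p => ∫ t in a..p.1, F' p.2 t)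
      (by fun_prop)).continuousAt
  have diagonal_deriv : HasDerivAt (fun y : ℝ => (y, y)) (1, 1) x :=
    (hasDerivAt_id x).prodMk (hasDerivAt_id x)
  simpa [Function.comp_def, Function.HasUncurry.uncurry] using!
    total_deriv.hasFDerivAt.comp_hasDerivAt (f := fun y => (y, y)) x diagonal_deriv

-- Both sides agree at `b = a`, and by the Leibniz rule they have the same derivative in `b`.
theorem intervalIntegral_triangle_swap (hFc : Continuous ↿F) (a b : ℝ) :
    ∫ x in a..b, ∫ t in a..x, F x t = ∫ x in a..b, ∫ t in x..b, F t x := by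
  have inner_deriv (y x : ℝ) : HasDerivAt (fun y => ∫ t in x..y, F t x) (F y x) y :=
    ((show Continuous fun t => F t x by fun_prop).integral_hasStrictDerivAt x y).hasDerivAt
  have inner_continuous : Continuous ↿fun y x => ∫ t in x..y, F t x := by
    have : (↿fun y x => ∫ t in x..y, F t x) =
        fun p : ℝ × ℝ => (∫ t in a..p.1, F t p.2) - ∫ t in a..p.2, F t p.2 := by
      funext p
      have hp : Continuous fun t => F t p.2 := by fun_prop
      exact (intervalIntegral.integral_interval_sub_left
        (hp.intervalIntegrable _ _) (hp.intervalIntegrable _ _)).symm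
    rw [this]
    fun_prop
  have outer_deriv (y : ℝ) : HasDerivAt (fun y => ∫ x in a..y, ∫ t in x..y, F t x)
      (∫ t in a..y, F y t) y := by
    simpa using hasDerivAt_parametric_primitive inner_deriv inner_continuous
      hFc a y
  have outer_deriv_continuous : Continuous fun y => ∫ t in a..y, F y t := by fun_prop
  simpa using intervalIntegral.integral_eq_sub_of_hasDerivAt (fun y _ => outer_deriv y)
    (outer_deriv_continuous.intervalIntegrable a b)

end IntervalIntegral

section Wirtinger

variable {f f' : ℝ → ℝ} {a b : ℝ}

-- Completing the square: `(g f²)' = f'² - q f² - (f' - g f)²`.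
theorem riccati_boundary_le_integral {g q : ℝ → ℝ} (hab : a ≤ b)
    (hf : ∀ x ∈ Icc a b, HasDerivAt f (f' x) x) (hf' : ContinuousOn f' (Icc a b))
    (hg : ∀ x ∈ Icc a b, HasDerivAt g (-(q x + g x ^ 2)) x) (hq : ContinuousOn q (Icc a b)) :
    g b * f b ^ 2 - g a * f a ^ 2 ≤ (∫ x in a..b, f' x ^ 2) - ∫ x in a..b, q x * f x ^ 2 := by
  have hfc : ContinuousOn f (Icc a b) := fun x hx => (hf x hx).continuousAt.continuousWithinAt
  have hgc : ContinuousOn g (Icc a b) := fun x hx => (hg x hx).continuousAt.continuousWithinAt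
  rw [← uIcc_of_le hab] at hf hf' hg hq hfc hgc
  have deriv_gf : ∀ x ∈ uIcc a b, HasDerivAt (fun x => g x * f x ^ 2)
      (-(q x + g x ^ 2) * f x ^ 2 + g x * (2 * f x * f' x)) x := fun x hx => by
    simpa using (hg x hx).fun_mul ((hf x hx).fun_pow 2)
  have deriv_continuous : ContinuousOn
      (fun x => -(q x + g x ^ 2) * f x ^ 2 + g x * (2 * f x * f' x)) (uIcc a b) := by fun_prop
  have integrable_f'_sq : IntervalIntegrable (fun x => f' x ^ 2) volume a b :=
    ContinuousOn.intervalIntegrable (by fun_prop)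
  have integrable_qf_sq : IntervalIntegrable (fun x => q x * f x ^ 2) volume a b :=
    ContinuousOn.intervalIntegrable (by fun_prop)
  rw [← intervalIntegral.integral_eq_sub_of_hasDerivAt deriv_gf
    deriv_continuous.intervalIntegrable, ← intervalIntegral.integral_sub integrable_f'_sq
    integrable_qf_sq]
  refine intervalIntegral.integral_mono_on hab deriv_continuous.intervalIntegrable
    (integrable_f'_sq.sub integrable_qf_sq) fun x _ => ?_
  linarith [sq_nonneg (f' x - g x * f x)]

theorem hasDerivAt_mul_tan_mul_sub {l x : ℝ} (h : cos (l * (b - x)) ≠ 0) :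
    HasDerivAt (fun x => l * tan (l * (b - x))) (-(l ^ 2 + (l * tan (l * (b - x))) ^ 2)) x := by
  have deriv_arg : HasDerivAt (fun x => l * (b - x)) (l * -1) x :=
    ((hasDerivAt_id x).const_sub b).const_mul l
  refine (((hasDerivAt_tan h).comp x deriv_arg).const_mul l).congr_deriv ?_
  rw [one_div, ← inv_one_add_tan_sq h, inv_inv]
  ring

theorem sq_mul_integral_sq_le_integral_deriv_sq {l : ℝ} (hl : 0 ≤ l) (hab : a ≤ b)
    (hlab : l * (b - a) < π / 2) (hf : ∀ x ∈ Icc a b, HasDerivAt f (f' x) x)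
    (hf' : ContinuousOn f' (Icc a b)) (hfa : f a = 0) :
    l ^ 2 * ∫ x in a..b, f x ^ 2 ≤ ∫ x in a..b, f' x ^ 2 := by
  have cos_ne_zero : ∀ x ∈ Icc a b, cos (l * (b - x)) ≠ 0 := fun x hx => by
    refine (cos_pos_of_mem_Ioo ⟨?_, ?_⟩).ne'
    · linarith [pi_pos, mul_nonneg hl (sub_nonneg.2 hx.2)]
    · exact (mul_le_mul_of_nonneg_left (sub_le_sub_left hx.1 b) hl).trans_lt hlab
  have riccati := riccati_boundary_le_integral hab hf hf'
    (fun x hx => hasDerivAt_mul_tan_mul_sub (cos_ne_zero x hx)) continuousOn_const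
  simpa [hfa] using riccati

theorem wirtinger_inequality (hab : a ≤ b) (hf : ∀ x ∈ Icc a b, HasDerivAt f (f' x) x)
    (hf' : ContinuousOn f' (Icc a b)) (hfa : f a = 0) :
    (π / 2) ^ 2 * ∫ x in a..b, f x ^ 2 ≤ (b - a) ^ 2 * ∫ x in a..b, f' x ^ 2 := by
  obtain rfl | hlt := hab.eq_or_lt
  · simp
  have hpos : 0 < b - a := sub_pos.2 hlt
  have subcritical : ∀ θ ∈ Ioo 0 (π / 2),
      θ ^ 2 * ∫ x in a..b, f x ^ 2 ≤ (b - a) ^ 2 * ∫ x in a..b, f' x ^ 2 := fun θ hθ => by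
    have := sq_mul_integral_sq_le_integral_deriv_sq (l := θ / (b - a))
      (div_nonneg hθ.1.le hpos.le) hab (by rw [div_mul_cancel₀ _ hpos.ne']; exact hθ.2) hf hf' hfa
    rwa [div_pow, div_mul_eq_mul_div, div_le_iff₀ (by positivity), mul_comm (∫ x in a..b, _)]
      at this
  refine ContinuousWithinAt.closure_le (s := Ioo 0 (π / 2)) (x := π / 2)
    (f := fun θ => θ ^ 2 * ∫ x in a..b, f x ^ 2) ?_ (by fun_prop) continuousWithinAt_const
    subcritical
  rw [closure_Ioo (by positivity)]
  exact right_mem_Icc.2 (by positivity)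

end Wirtinger

theorem two_mul_integral_secondOrder_mul_self {p r z : ℝ → ℝ} (hp : ContDiff ℝ 2 p)
    (hr : ContDiff ℝ 1 r) (hz : ContDiff ℝ 2 z) (x₀ x₁ : ℝ) :
    2 * ∫ x in x₀..x₁, (p x * iteratedDeriv 2 z x + r x * deriv z x) * z x =
      (2 * p x₁ * z x₁ * deriv z x₁ + (r x₁ - deriv p x₁) * z x₁ ^ 2)
        - (2 * p x₀ * z x₀ * deriv z x₀ + (r x₀ - deriv p x₀) * z x₀ ^ 2)
        - 2 * (∫ x in x₀..x₁, p x * deriv z x ^ 2)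
        + ∫ x in x₀..x₁, (iteratedDeriv 2 p x - deriv r x) * z x ^ 2 := by
  have hasDerivAt_of_contDiff_two {f : ℝ → ℝ} (hf : ContDiff ℝ 2 f) (x : ℝ) :
      HasDerivAt f (deriv f x) x ∧ HasDerivAt (deriv f) (iteratedDeriv 2 f x) x := by
    rw [iteratedDeriv_succ, iteratedDeriv_one]
    exact ⟨(hf.differentiable two_ne_zero x).hasDerivAt,
      (hf.differentiable_deriv_two x).hasDerivAt⟩
  have boundary_deriv (x : ℝ) : HasDerivAt
      (fun x => 2 * (p x * (z x * deriv z x)) + (r x - deriv p x) * z x ^ 2)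
      (2 * ((p x * iteratedDeriv 2 z x + r x * deriv z x) * z x) + 2 * (p x * deriv z x ^ 2)
        - (iteratedDeriv 2 p x - deriv r x) * z x ^ 2) x := by
    obtain ⟨hp₁, hp₂⟩ := hasDerivAt_of_contDiff_two hp x
    obtain ⟨hz₁, hz₂⟩ := hasDerivAt_of_contDiff_two hz x
    have hr₁ := (hr.differentiable one_ne_zero x).hasDerivAt
    refine (((hp₁.fun_mul (hz₁.fun_mul hz₂)).const_mul 2).fun_add
      ((hr₁.fun_sub hp₂).fun_mul (hz₁.fun_pow 2))).congr_deriv ?_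
    push_cast
    ring
  have hz₁c := hz.continuous_deriv one_le_two
  have ftc := intervalIntegral.integral_eq_sub_of_hasDerivAt (a := x₀) (b := x₁)
    (fun x _ => boundary_deriv x) (Continuous.intervalIntegrable (by fun_prop) _ _)
  rw [intervalIntegral.integral_sub, intervalIntegral.integral_add,
    intervalIntegral.integral_const_mul, intervalIntegral.integral_const_mul] at ftc
  · linarith
  all_goals exact Continuous.intervalIntegrable (by fun_prop) _ _

theorem integral_sub_const_sq {z : ℝ → ℝ} (hz : Continuous z) (r : ℝ) :
    ∫ x in (0 : ℝ)..1, (z x - r) ^ 2 =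
      (∫ x in (0 : ℝ)..1, z x ^ 2) - 2 * r * (∫ x in (0 : ℝ)..1, z x) + r ^ 2 := by
  have expand (x : ℝ) : (z x - r) ^ 2 = z x ^ 2 - 2 * r * z x + r ^ 2 := by ring
  simp only [expand]
  rw [intervalIntegral.integral_add, intervalIntegral.integral_sub,
    intervalIntegral.integral_const_mul]
  · simp
  all_goals exact Continuous.intervalIntegrable (by fun_prop) _ _

theorem integral_mul_deriv_sq_ge {p z : ℝ → ℝ} {δ : ℝ} (hp : ContinuousOn p (Icc 0 1)) (hδ : 0 ≤ δ)
    (hpδ : ∀ x ∈ Icc (0 : ℝ) 1, δ ≤ p x) (hz : ContDiff ℝ 1 z) :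
    π ^ 2 / 4 * δ * ((∫ x in (0 : ℝ)..1, z x ^ 2) - 2 * z 0 * (∫ x in (0 : ℝ)..1, z x) + z 0 ^ 2)
      ≤ ∫ x in (0 : ℝ)..1, p x * deriv z x ^ 2 := by
  have hz₁c := hz.continuous_deriv_one
  have wirtinger := wirtinger_inequality (f := fun x => z x - z 0) zero_le_one
    (fun x _ => ((hz.differentiable one_ne_zero x).hasDerivAt.sub_const (z 0)))
    hz₁c.continuousOn (sub_self _)
  rw [integral_sub_const_sq hz.continuous] at wirtinger
  calc _ = δ * ((π / 2) ^ 2 * _) := by ring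
    _ ≤ δ * ((1 - 0) ^ 2 * ∫ x in (0 : ℝ)..1, deriv z x ^ 2) :=
      mul_le_mul_of_nonneg_left wirtinger hδ
    _ = ∫ x in (0 : ℝ)..1, δ * deriv z x ^ 2 := by
      rw [intervalIntegral.integral_const_mul]; ring
    _ ≤ _ := by
      rw [← uIcc_of_le zero_le_one] at hp
      refine intervalIntegral.integral_mono_on zero_le_one
        (Continuous.intervalIntegrable (by fun_prop) _ _)
        (ContinuousOn.intervalIntegrable (by fun_prop)) fun x hx => ?_
      exact mul_le_mul_of_nonneg_right (hpδ x hx) (sq_nonneg _)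

section SemisepOp

variable {M N : ℝ → ℝ} {K1 K2 J1 J2 : ℝ → ℝ → ℝ} {z w : ℝ → ℝ}

theorem continuous_flip (hK : Continuous ↿K1) : Continuous ↿(flip K1) := by
  unfold flip
  fun_prop

theorem continuous_semisepOp (hM : Continuous M) (hK1 : Continuous ↿K1) (hK2 : Continuous ↿K2)
    (hz : Continuous z) : Continuous (semisepOp M K1 K2 z) := by
  have upper_continuous := continuous_parametric_intervalIntegral_left
    (F := fun x ξ => K2 x ξ * z ξ) (by fun_prop) 1
  unfold semisepOp
  fun_prop

theorem mul_semisepOp (g : ℝ → ℝ) (x : ℝ) :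
    g x * semisepOp M K1 K2 z x =
      semisepOp (fun x => g x * M x) (fun x ξ => g x * K1 x ξ) (fun x ξ => g x * K2 x ξ) z x := by
  simp only [semisepOp, mul_assoc, intervalIntegral.integral_const_mul, mul_add]

theorem semisepOp_add_multiplier (g : ℝ → ℝ) (x : ℝ) :
    semisepOp (fun x => M x + g x) K1 K2 z x = semisepOp M K1 K2 z x + g x * z x := by
  simp only [semisepOp]
  ring

theorem semisepOp_add {x : ℝ} (hK1 : Continuous (K1 x)) (hK2 : Continuous (K2 x))
    (hJ1 : Continuous (J1 x)) (hJ2 : Continuous (J2 x)) (hz : Continuous z) :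
    semisepOp M K1 K2 z x + semisepOp N J1 J2 z x =
      semisepOp (fun x => M x + N x) (fun x ξ => K1 x ξ + J1 x ξ) (fun x ξ => K2 x ξ + J2 x ξ)
        z x := by
  have integrable_mul {k : ℝ → ℝ} (hk : Continuous k) (u v : ℝ) :
      IntervalIntegrable (fun ξ => k ξ * z ξ) volume u v := (hk.mul hz).intervalIntegrable u v
  simp only [semisepOp, add_mul]
  rw [intervalIntegral.integral_add (integrable_mul hK1 _ _) (integrable_mul hJ1 _ _),
    intervalIntegral.integral_add (integrable_mul hK2 _ _) (integrable_mul hJ2 _ _)]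
  ring

theorem integral_semisepOp_mul (hM : Continuous M) (hK1 : Continuous ↿K1)
    (hK2 : Continuous ↿K2) (hz : Continuous z) (hw : Continuous w) :
    ∫ x in (0 : ℝ)..1, semisepOp M K1 K2 z x * w x =
      (∫ x in (0 : ℝ)..1, M x * z x * w x)
        + (∫ x in (0 : ℝ)..1, ∫ ξ in (0 : ℝ)..x, K1 x ξ * z ξ * w x)
        + ∫ x in (0 : ℝ)..1, ∫ ξ in x..1, K2 x ξ * z ξ * w x := by
  have upper_continuous := continuous_parametric_intervalIntegral_left
    (F := fun x ξ => K2 x ξ * z ξ) (by fun_prop) 1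
  simp only [semisepOp, add_mul, intervalIntegral.integral_mul_const]
  rw [intervalIntegral.integral_add, intervalIntegral.integral_add]
  all_goals exact Continuous.intervalIntegrable (by fun_prop) _ _

theorem integral_semisepOp_mul_eq_integral_semisepOp_flip_mul (hM : Continuous M)
    (hK1 : Continuous ↿K1) (hK2 : Continuous ↿K2) (hz : Continuous z) (hw : Continuous w) :
    ∫ x in (0 : ℝ)..1, semisepOp M K1 K2 z x * w x =
      ∫ x in (0 : ℝ)..1, semisepOp M (flip K2) (flip K1) w x * z x := by
  have swap_lower := intervalIntegral_triangle_swap (F := fun x ξ => K1 x ξ * z ξ * w x)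
    (by fun_prop) 0 1
  have swap_upper := intervalIntegral_triangle_swap (F := fun x ξ => K2 ξ x * z x * w ξ)
    (by fun_prop) 0 1
  rw [integral_semisepOp_mul hM hK1 hK2 hz hw, swap_lower, ← swap_upper,
    integral_semisepOp_mul hM (continuous_flip hK2) (continuous_flip hK1) hw hz]
  simp only [flip, mul_right_comm _ (w _) (z _)]
  ring

theorem two_mul_integral_semisepOp_mul_self (hM : Continuous M)
    (hK1 : Continuous ↿K1) (hK2 : Continuous ↿K2) (hz : Continuous z) :
    2 * ∫ x in (0 : ℝ)..1, semisepOp M K1 K2 z x * z x =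
      ∫ x in (0 : ℝ)..1, semisepOp (fun x => 2 * M x) (fun x ξ => K1 x ξ + K2 ξ x)
        (fun x ξ => K1 ξ x + K2 x ξ) z x * z x := by
  have hc := continuous_semisepOp hM hK1 hK2 hz
  have hc' := continuous_semisepOp hM (continuous_flip hK2) (continuous_flip hK1) hz
  rw [two_mul]
  nth_rw 2 [integral_semisepOp_mul_eq_integral_semisepOp_flip_mul hM hK1 hK2 hz hz]
  rw [← intervalIntegral.integral_add ((hc.fun_mul hz).intervalIntegrable _ _)
    ((hc'.fun_mul hz).intervalIntegrable _ _)]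
  refine intervalIntegral.integral_congr fun x _ => ?_
  simp only [← add_mul]
  rw [semisepOp_add (by fun_prop) (by fun_prop) (by unfold flip; fun_prop)
    (by unfold flip; fun_prop) hz]
  simp only [flip, two_mul, add_comm (K2 _ _) (K1 _ _)]

theorem integral_semisepOp_add_multiplier_mul_self {g : ℝ → ℝ} (hM : Continuous M)
    (hg : Continuous g) (hK1 : Continuous ↿K1) (hK2 : Continuous ↿K2) (hz : Continuous z) :
    ∫ x in (0 : ℝ)..1, semisepOp (fun x => M x + g x) K1 K2 z x * z x =
      (∫ x in (0 : ℝ)..1, semisepOp M K1 K2 z x * z x) + ∫ x in (0 : ℝ)..1, g x * z x ^ 2 := by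
  have hP := continuous_semisepOp hM hK1 hK2 hz
  rw [← intervalIntegral.integral_add (Continuous.intervalIntegrable (by fun_prop) _ _)
    (Continuous.intervalIntegrable (by fun_prop) _ _)]
  refine intervalIntegral.integral_congr fun x _ => ?_
  simp only [semisepOp_add_multiplier]
  ring

end SemisepOp

/-- The partial derivative of a kernel `K (x, ξ)` in its first variable `x`. -/
def partialFst (K : ℝ → ℝ → ℝ) (x ξ : ℝ) : ℝ := deriv (fun t => K t ξ) x

section PartialFst

variable {K : ℝ → ℝ → ℝ}

theorem hasDerivAt_partialFst (hK : ContDiff ℝ 1 ↿K) (x ξ : ℝ) :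
    HasDerivAt (fun t => K t ξ) (partialFst K x ξ) x := by
  have : ContDiff ℝ 1 fun t => K t ξ := by fun_prop
  exact (this.differentiable one_ne_zero x).hasDerivAt

theorem contDiff_partialFst {n : WithTop ℕ∞} (hK : ContDiff ℝ (n + 1) ↿K) :
    ContDiff ℝ n ↿(partialFst K) :=
  ContDiff.fderiv_apply (f := fun (p : ℝ × ℝ) t => K t p.2) (g := Prod.fst) (k := fun _ => 1)
    (by fun_prop) contDiff_fst contDiff_const le_rfl

theorem continuous_partialFst (hK : ContDiff ℝ 1 ↿K) : Continuous ↿(partialFst K) :=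
  (contDiff_partialFst (n := 0) (by simpa using hK)).continuous

theorem iteratedDeriv_two_eq_partialFst_partialFst (x ξ : ℝ) :
    iteratedDeriv 2 (fun t => K t ξ) x = partialFst (partialFst K) x ξ := by
  rw [iteratedDeriv_succ, iteratedDeriv_one]
  rfl

end PartialFst

/-- The second-order differential operator `f ↦ a f'' + b f' + c f`. -/
def secondOrderOp (a b c f : ℝ → ℝ) (x : ℝ) : ℝ :=
  a x * iteratedDeriv 2 f x + b x * deriv f x + c x * f x

section Dual

variable {a b c M z : ℝ → ℝ} {K K1 K2 : ℝ → ℝ → ℝ}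

theorem contDiff_flip {n : WithTop ℕ∞} (hK : ContDiff ℝ n ↿K) : ContDiff ℝ n ↿(flip K) := by
  unfold flip
  fun_prop

theorem hasDerivAt_semisepOp (hM : Differentiable ℝ M) (hK1 : ContDiff ℝ 1 ↿K1)
    (hK2 : ContDiff ℝ 1 ↿K2) (hz : Differentiable ℝ z) (x : ℝ) :
    HasDerivAt (semisepOp M K1 K2 z)
      (semisepOp (deriv M) (partialFst K1) (partialFst K2) z x + M x * deriv z x
        + (K1 x x - K2 x x) * z x) x := by
  have hzc := hz.continuous
  have primitive_deriv {J : ℝ → ℝ → ℝ} (hJ : ContDiff ℝ 1 ↿J) (e : ℝ) :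
      HasDerivAt (fun y => ∫ ξ in e..y, J y ξ * z ξ)
        (J x x * z x + ∫ ξ in e..x, partialFst J x ξ * z ξ) x := by
    have hJ₁c := continuous_partialFst hJ
    exact hasDerivAt_parametric_primitive (F := fun y ξ => J y ξ * z ξ)
      (F' := fun y ξ => partialFst J y ξ * z ξ)
      (fun y ξ => (hasDerivAt_partialFst hJ y ξ).mul_const (z ξ)) (by fun_prop) (by fun_prop) e x
  have multiplier_deriv := (hM x).hasDerivAt.fun_mul (hz x).hasDerivAt
  have semisepOp_eq : semisepOp M K1 K2 z = fun y =>
      M y * z y + (∫ ξ in (0 : ℝ)..y, K1 y ξ * z ξ) + -∫ ξ in (1 : ℝ)..y, K2 y ξ * z ξ := by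
    funext y
    rw [semisepOp, intervalIntegral.integral_symm (1 : ℝ) y]
  rw [semisepOp_eq]
  refine ((multiplier_deriv.fun_add (primitive_deriv hK1 0)).fun_add
    (primitive_deriv hK2 1).fun_neg).congr_deriv ?_
  rw [semisepOp, intervalIntegral.integral_symm (1 : ℝ) x]
  ring

theorem deriv_semisepOp_flip (hM : Differentiable ℝ M) (hK : ContDiff ℝ 1 ↿K)
    (hz : Differentiable ℝ z) :
    deriv (semisepOp M K (flip K) z) = fun x =>
      semisepOp (deriv M) (partialFst K) (partialFst (flip K)) z x + M x * deriv z x := by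
  funext x
  simpa [flip] using (hasDerivAt_semisepOp hM hK (contDiff_flip hK) hz x).deriv

theorem iteratedDeriv_two_semisepOp_flip (hM : ContDiff ℝ 2 M) (hK : ContDiff ℝ 2 ↿K)
    (hz : ContDiff ℝ 2 z) (x : ℝ) :
    iteratedDeriv 2 (semisepOp M K (flip K) z) x =
      semisepOp (iteratedDeriv 2 M) (partialFst (partialFst K))
          (partialFst (partialFst (flip K))) z x
        + 2 * deriv M x * deriv z x + M x * iteratedDeriv 2 z x
        + (partialFst K x x - partialFst (flip K) x x) * z x := by
  have hM₀ := hM.differentiable two_ne_zero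
  have hz₀ := hz.differentiable two_ne_zero
  have hM₁ := hM.differentiable_deriv_two
  have hz₁ := hz.differentiable_deriv_two
  have hK₁ : ContDiff ℝ 1 ↿(partialFst K) := contDiff_partialFst hK
  have hK₁' : ContDiff ℝ 1 ↿(partialFst (flip K)) := contDiff_partialFst (contDiff_flip hK)
  have second_deriv := (hasDerivAt_semisepOp hM₁ hK₁ hK₁' hz₀ x).fun_add
    ((hM₀ x).hasDerivAt.fun_mul (hz₁ x).hasDerivAt)
  simp only [iteratedDeriv_succ, iteratedDeriv_zero]
  rw [deriv_semisepOp_flip hM₀ (hK.of_le one_le_two) hz₀, second_deriv.deriv]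
  ring

theorem continuous_secondOrderOp (ha : Continuous a) (hb : Continuous b) (hc : Continuous c)
    {f : ℝ → ℝ} (hf : ContDiff ℝ 2 f) : Continuous (secondOrderOp a b c f) := by
  have hf₁ := hf.continuous_deriv one_le_two
  unfold secondOrderOp
  fun_prop

theorem continuous_secondOrderOp_kernel (ha : Continuous a) (hb : Continuous b) (hc : Continuous c)
    (hK : ContDiff ℝ 2 ↿K) : Continuous ↿fun x ξ => secondOrderOp a b c (fun t => K t ξ) x := by
  have hK₁ : ContDiff ℝ 1 ↿(partialFst K) := contDiff_partialFst hK
  have hK₂c := continuous_partialFst hK₁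
  simp only [secondOrderOp, iteratedDeriv_two_eq_partialFst_partialFst]
  change Continuous ↿fun x ξ => a x * partialFst (partialFst K) x ξ + b x * partialFst K x ξ
    + c x * K x ξ
  fun_prop

theorem semisepOp_secondOrderOp (hK1 : ContDiff ℝ 2 ↿K1) (hK2 : ContDiff ℝ 2 ↿K2)
    (hz : Continuous z) (x : ℝ) :
    semisepOp (secondOrderOp a b c M) (fun x ξ => secondOrderOp a b c (fun t => K1 t ξ) x)
        (fun x ξ => secondOrderOp a b c (fun t => K2 t ξ) x) z x =
      a x * semisepOp (iteratedDeriv 2 M) (partialFst (partialFst K1))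
          (partialFst (partialFst K2)) z x
        + b x * semisepOp (deriv M) (partialFst K1) (partialFst K2) z x
        + c x * semisepOp M K1 K2 z x := by
  have partials_continuous {J : ℝ → ℝ → ℝ} (hJ : ContDiff ℝ 2 ↿J) :
      Continuous (J x) ∧ Continuous (partialFst J x) ∧
        Continuous (partialFst (partialFst J) x) := by
    have hJ₁ : ContDiff ℝ 1 ↿(partialFst J) := contDiff_partialFst hJ
    have hJ₂c := continuous_partialFst hJ₁
    exact ⟨by fun_prop, by fun_prop, by fun_prop⟩
  obtain ⟨hK1c, hK1₁, hK1₂⟩ := partials_continuous hK1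
  obtain ⟨hK2c, hK2₁, hK2₂⟩ := partials_continuous hK2
  rw [mul_semisepOp, mul_semisepOp, mul_semisepOp, semisepOp_add _ _ _ _ hz,
    semisepOp_add _ _ _ _ hz]
  · simp only [← iteratedDeriv_two_eq_partialFst_partialFst]
    rfl
  all_goals fun_prop

theorem secondOrderOp_semisepOp_flip (hM : ContDiff ℝ 2 M) (hK : ContDiff ℝ 2 ↿K)
    (hz : ContDiff ℝ 2 z) (x : ℝ) :
    secondOrderOp a b c (semisepOp M K (flip K) z) x =
      semisepOp
          (fun x => secondOrderOp a b c M x + a x * (partialFst K x x - partialFst (flip K) x x))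
          (fun x ξ => secondOrderOp a b c (fun t => K t ξ) x)
          (fun x ξ => secondOrderOp a b c (fun t => flip K t ξ) x) z x
        + (a x * M x * iteratedDeriv 2 z x + (2 * a x * deriv M x + b x * M x) * deriv z x) := by
  rw [semisepOp_add_multiplier (M := secondOrderOp a b c M),
    semisepOp_secondOrderOp hK (contDiff_flip hK) hz.continuous, secondOrderOp,
    iteratedDeriv_two_semisepOp_flip hM hK hz, deriv_semisepOp_flip
      (hM.differentiable two_ne_zero) (hK.of_le one_le_two) (hz.differentiable two_ne_zero)]
  ring

/-- The kernel `T1` of the dual operator inequality: the sum of the operator `a ∂² + b ∂ + c`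
applied to `K` in each of its two variables. -/
def dualKernel (a b c : ℝ → ℝ) (K : ℝ → ℝ → ℝ) (x ξ : ℝ) : ℝ :=
  secondOrderOp a b c (fun t => K t ξ) x + secondOrderOp a b c (K x) ξ

/-- The multiplier `T0` of the dual operator inequality, without its constant term
`-(π² / 2) α ε₁`. -/
def dualMultiplier (a b c M : ℝ → ℝ) (K : ℝ → ℝ → ℝ) (x : ℝ) : ℝ :=
  (iteratedDeriv 2 a x - deriv b x) * M x + b x * deriv M x + a x * iteratedDeriv 2 M x
    + 2 * c x * M x + 2 * a x * (partialFst K x x - partialFst (flip K) x x)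

theorem continuous_dualKernel (ha : Continuous a) (hb : Continuous b) (hc : Continuous c)
    (hK : ContDiff ℝ 2 ↿K) : Continuous ↿(dualKernel a b c K) :=
  (continuous_secondOrderOp_kernel ha hb hc hK).add
    (continuous_flip (continuous_secondOrderOp_kernel ha hb hc (contDiff_flip hK)))

theorem continuous_dualMultiplier (ha : ContDiff ℝ 2 a) (hb : ContDiff ℝ 1 b) (hc : Continuous c)
    (hM : ContDiff ℝ 2 M) (hK : ContDiff ℝ 2 ↿K) : Continuous (dualMultiplier a b c M K) := by
  have hK₁ := continuous_partialFst (hK.of_le one_le_two)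
  have hK₁' := continuous_partialFst (contDiff_flip (hK.of_le one_le_two))
  unfold dualMultiplier
  fun_prop

theorem iteratedDeriv_two_mul_sub_deriv (ha : ContDiff ℝ 2 a) (hb : ContDiff ℝ 1 b)
    (hM : ContDiff ℝ 2 M) (x : ℝ) :
    iteratedDeriv 2 (fun x => a x * M x) x
        - deriv (fun x => 2 * a x * deriv M x + b x * M x) x =
      (iteratedDeriv 2 a x - deriv b x) * M x - b x * deriv M x - a x * iteratedDeriv 2 M x := by
  have ha₀ := ha.differentiable two_ne_zero
  have hM₀ := hM.differentiable two_ne_zero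
  have hb₀ := hb.differentiable one_ne_zero
  have deriv_mul_eq : deriv (fun x => a x * M x) = fun x => deriv a x * M x + a x * deriv M x :=
    funext fun x => deriv_fun_mul (ha₀ x) (hM₀ x)
  simp only [iteratedDeriv_succ, iteratedDeriv_zero, deriv_mul_eq]
  simp (disch := fun_prop) only [deriv_fun_add, deriv_fun_mul, deriv_const]
  ring

theorem dualMultiplier_eq (ha : ContDiff ℝ 2 a) (hb : ContDiff ℝ 1 b) (hM : ContDiff ℝ 2 M) :
    dualMultiplier a b c M K = fun x =>
      2 * (secondOrderOp a b c M x + a x * (partialFst K x x - partialFst (flip K) x x))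
        + (iteratedDeriv 2 (fun x => a x * M x) x
          - deriv (fun x => 2 * a x * deriv M x + b x * M x) x) := by
  funext x
  rw [iteratedDeriv_two_mul_sub_deriv ha hb hM, dualMultiplier, secondOrderOp]
  ring

theorem continuous_secondOrderOp_add_diagonal_jump (ha : Continuous a) (hb : Continuous b)
    (hc : Continuous c) (hM : ContDiff ℝ 2 M) (hK : ContDiff ℝ 1 ↿K) :
    Continuous fun x =>
      secondOrderOp a b c M x + a x * (partialFst K x x - partialFst (flip K) x x) := by
  have hLM := continuous_secondOrderOp ha hb hc hM
  have hK₁ := continuous_partialFst hK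
  have hK₁' := continuous_partialFst (contDiff_flip hK)
  fun_prop

theorem continuous_secondOrderOp_semisepOp_flip (ha : Continuous a) (hb : Continuous b)
    (hc : Continuous c) (hM : ContDiff ℝ 2 M) (hK : ContDiff ℝ 2 ↿K) (hz : ContDiff ℝ 2 z) :
    Continuous (secondOrderOp a b c (semisepOp M K (flip K) z)) := by
  have hP := continuous_semisepOp
    (continuous_secondOrderOp_add_diagonal_jump ha hb hc hM (hK.of_le one_le_two))
    (continuous_secondOrderOp_kernel ha hb hc hK)
    (continuous_secondOrderOp_kernel ha hb hc (contDiff_flip hK)) hz.continuous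
  have hM₁ := hM.continuous_deriv one_le_two
  have hz₁ := hz.continuous_deriv one_le_two
  rw [funext (secondOrderOp_semisepOp_flip hM hK hz)]
  fun_prop

theorem integral_secondOrderOp_semisepOp_mul_self (ha : Continuous a) (hb : Continuous b)
    (hc : Continuous c) (hM : ContDiff ℝ 2 M) (hK : ContDiff ℝ 2 ↿K) (hz : ContDiff ℝ 2 z) :
    ∫ x in (0 : ℝ)..1, secondOrderOp a b c (semisepOp M K (flip K) z) x * z x =
      (∫ x in (0 : ℝ)..1, semisepOp
          (fun x => secondOrderOp a b c M x + a x * (partialFst K x x - partialFst (flip K) x x))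
          (fun x ξ => secondOrderOp a b c (fun t => K t ξ) x)
          (fun x ξ => secondOrderOp a b c (fun t => flip K t ξ) x) z x * z x)
        + ∫ x in (0 : ℝ)..1, (a x * M x * iteratedDeriv 2 z x
            + (2 * a x * deriv M x + b x * M x) * deriv z x) * z x := by
  have hP := continuous_semisepOp
    (continuous_secondOrderOp_add_diagonal_jump ha hb hc hM (hK.of_le one_le_two))
    (continuous_secondOrderOp_kernel ha hb hc hK)
    (continuous_secondOrderOp_kernel ha hb hc (contDiff_flip hK)) hz.continuous
  have hzc := hz.continuous
  have hM₁ := hM.continuous_deriv one_le_two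
  have hz₁ := hz.continuous_deriv one_le_two
  rw [← intervalIntegral.integral_add ((hP.fun_mul hzc).intervalIntegrable _ _)
    (Continuous.intervalIntegrable (by fun_prop) _ _)]
  refine intervalIntegral.integral_congr fun x _ => ?_
  simp only [secondOrderOp_semisepOp_flip hM hK hz, add_mul]

theorem integral_semisepOp_dualMultiplier_mul_self (ha : ContDiff ℝ 2 a) (hb : ContDiff ℝ 1 b)
    (hc : Continuous c) (hM : ContDiff ℝ 2 M) (hK : ContDiff ℝ 2 ↿K) {J1 J2 : ℝ → ℝ → ℝ}
    (hJ1 : Continuous ↿J1) (hJ2 : Continuous ↿J2) (hz : Continuous z) :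
    ∫ x in (0 : ℝ)..1, semisepOp (dualMultiplier a b c M K) J1 J2 z x * z x =
      (∫ x in (0 : ℝ)..1, semisepOp (fun x => 2 * (secondOrderOp a b c M x
          + a x * (partialFst K x x - partialFst (flip K) x x))) J1 J2 z x * z x)
        + ∫ x in (0 : ℝ)..1, (iteratedDeriv 2 (fun x => a x * M x) x
          - deriv (fun x => 2 * a x * deriv M x + b x * M x) x) * z x ^ 2 := by
  have hN := continuous_secondOrderOp_add_diagonal_jump ha.continuous hb.continuous hc hM
    (hK.of_le one_le_two)
  have hp₂ := (ha.mul hM).continuous_iteratedDeriv' 2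
  have hr₁ : Continuous (deriv fun x => 2 * a x * deriv M x + b x * M x) := by
    have := ha.of_le one_le_two
    have := hM.of_le one_le_two
    exact ContDiff.continuous_deriv_one (by fun_prop)
  rw [← integral_semisepOp_add_multiplier_mul_self (by fun_prop) (hp₂.fun_sub hr₁) hJ1 hJ2 hz]
  rw [dualMultiplier_eq ha hb hM]

theorem two_mul_integral_secondOrderOp_semisepOp_mul_self (ha : ContDiff ℝ 2 a)
    (hb : ContDiff ℝ 1 b) (hc : Continuous c) (hM : ContDiff ℝ 2 M) (hK : ContDiff ℝ 2 ↿K)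
    (hz : ContDiff ℝ 2 z) :
    2 * ∫ x in (0 : ℝ)..1, secondOrderOp a b c (semisepOp M K (flip K) z) x * z x =
      (∫ x in (0 : ℝ)..1, semisepOp (dualMultiplier a b c M K) (dualKernel a b c K)
        (flip (dualKernel a b c K)) z x * z x)
      + (2 * a 1 * M 1 * z 1 * deriv z 1
        + ((b 1 - deriv a 1) * M 1 + a 1 * deriv M 1) * z 1 ^ 2)
      - (2 * a 0 * M 0 * z 0 * deriv z 0
        + ((b 0 - deriv a 0) * M 0 + a 0 * deriv M 0) * z 0 ^ 2)
      - 2 * ∫ x in (0 : ℝ)..1, a x * M x * deriv z x ^ 2 := by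
  have hr : ContDiff ℝ 1 fun x => 2 * a x * deriv M x + b x * M x := by
    have := ha.of_le one_le_two
    have := hM.of_le one_le_two
    fun_prop
  have hN := continuous_secondOrderOp_add_diagonal_jump ha.continuous hb.continuous hc hM
    (hK.of_le one_le_two)
  have hJ1 := continuous_secondOrderOp_kernel ha.continuous hb.continuous hc hK
  have hJ2 := continuous_secondOrderOp_kernel ha.continuous hb.continuous hc (contDiff_flip hK)
  have hT := continuous_dualKernel ha.continuous hb.continuous hc hK
  have symmetrize := two_mul_integral_semisepOp_mul_self hN hJ1 hJ2 hz.continuous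
  have absorb := integral_semisepOp_dualMultiplier_mul_self ha hb hc hM hK hT (continuous_flip hT)
    hz.continuous
  have by_parts := two_mul_integral_secondOrder_mul_self (ha.mul hM) hr hz 0 1
  have deriv_mul_eq (x : ℝ) : deriv (fun x => a x * M x) x = deriv a x * M x + a x * deriv M x :=
    deriv_fun_mul (ha.differentiable two_ne_zero x) (hM.differentiable two_ne_zero x)
  rw [integral_secondOrderOp_semisepOp_mul_self ha.continuous hb.continuous hc hM hK hz, mul_add,
    symmetrize, by_parts, absorb]
  simp only [deriv_mul_eq]
  unfold dualKernel flip
  ring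

end Dual

theorem integral_add_mul_const_mul {f g z : ℝ → ℝ} {x₀ x₁ : ℝ}
    (hf : IntervalIntegrable f volume x₀ x₁) (hg : IntervalIntegrable g volume x₀ x₁)
    (hz : ContinuousOn z (uIcc x₀ x₁)) (v : ℝ) :
    ∫ x in x₀..x₁, (f x + g x * v) * z x =
      (∫ x in x₀..x₁, f x * z x) + v * ∫ x in x₀..x₁, g x * z x := by
  rw [← intervalIntegral.integral_const_mul, ← intervalIntegral.integral_add
    (hf.mul_continuousOn hz) ((hg.mul_continuousOn hz).const_mul v)]
  refine intervalIntegral.integral_congr fun x _ => ?_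
  ring

section Inequality

variable {a b c M z : ℝ → ℝ} {K : ℝ → ℝ → ℝ} {δ : ℝ}

theorem integral_semisepOp_dualMultiplier_sub_const (ha : ContDiff ℝ 2 a) (hb : ContDiff ℝ 1 b)
    (hc : Continuous c) (hM : ContDiff ℝ 2 M) (hK : ContDiff ℝ 2 ↿K) (hz : Continuous z) (k : ℝ) :
    ∫ x in (0 : ℝ)..1, semisepOp (fun x => dualMultiplier a b c M K x - k) (dualKernel a b c K)
        (flip (dualKernel a b c K)) z x * z x =
      (∫ x in (0 : ℝ)..1, semisepOp (dualMultiplier a b c M K) (dualKernel a b c K)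
        (flip (dualKernel a b c K)) z x * z x) - k * ∫ x in (0 : ℝ)..1, z x ^ 2 := by
  have hT := continuous_dualKernel ha.continuous hb.continuous hc hK
  simp only [sub_eq_add_neg]
  rw [integral_semisepOp_add_multiplier_mul_self (continuous_dualMultiplier ha hb hc hM hK)
    continuous_const hT (continuous_flip hT) hz, intervalIntegral.integral_const_mul, neg_mul]

theorem dual_operator_inequality (ha : ContDiff ℝ 2 a) (hb : ContDiff ℝ 1 b) (hc : Continuous c)
    (hM : ContDiff ℝ 2 M) (hK : ContDiff ℝ 2 ↿K) (hδ : 0 ≤ δ)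
    (haM : ∀ x ∈ Icc (0 : ℝ) 1, δ ≤ a x * M x) (hz : ContDiff ℝ 2 z)
    (boundary_zero : deriv M 0 * z 0 + M 0 * deriv z 0
      + (∫ ξ in (0 : ℝ)..1, partialFst (flip K) 0 ξ * z ξ) = 0) :
    2 * ∫ x in (0 : ℝ)..1, secondOrderOp a b c (semisepOp M K (flip K) z) x * z x ≤
      (∫ x in (0 : ℝ)..1, semisepOp (fun x => dualMultiplier a b c M K x - π ^ 2 / 2 * δ)
        (dualKernel a b c K) (flip (dualKernel a b c K)) z x * z x)
      + ((deriv a 0 - b 0) * M 0 + a 0 * deriv M 0 - π ^ 2 / 2 * δ) * z 0 ^ 2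
      + z 0 * (∫ ξ in (0 : ℝ)..1, (2 * a 0 * partialFst (flip K) 0 ξ + π ^ 2 * δ) * z ξ)
      + ((b 1 - deriv a 1) * M 1 + a 1 * deriv M 1) * z 1 ^ 2
      + 2 * a 1 * M 1 * z 1 * deriv z 1 := by
  have poincare := integral_mul_deriv_sq_ge (ha.continuous.fun_mul hM.continuous).continuousOn hδ
    haM (hz.of_le one_le_two)
  have boundary_kernel : ∫ ξ in (0 : ℝ)..1, (2 * a 0 * partialFst (flip K) 0 ξ + π ^ 2 * δ) * z ξ =
      -(2 * a 0 * (deriv M 0 * z 0 + M 0 * deriv z 0)) + π ^ 2 * δ * ∫ ξ in (0 : ℝ)..1, z ξ := by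
    have hK₁ := continuous_partialFst (contDiff_flip (hK.of_le one_le_two))
    simp only [add_mul, mul_assoc]
    rw [intervalIntegral.integral_add (Continuous.intervalIntegrable (by fun_prop) _ _)
      (Continuous.intervalIntegrable (by fun_prop) _ _)]
    simp only [intervalIntegral.integral_const_mul]
    linear_combination 2 * a 0 * boundary_zero
  rw [two_mul_integral_secondOrderOp_semisepOp_mul_self ha hb hc hM hK hz, boundary_kernel,
    integral_semisepOp_dualMultiplier_sub_const ha hb hc hM hK hz.continuous]
  linarith

end Inequality

theorem IsPolyFun.contDiff {f : ℝ → ℝ} {n : WithTop ℕ∞} (hf : IsPolyFun f) : ContDiff ℝ n f := by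
  obtain ⟨p, hp⟩ := hf
  simpa only [Polynomial.coe_aeval_eq_eval, ← hp] using p.contDiff_aeval (𝕜 := ℝ) n

theorem IsPolyFun2.contDiff {K : ℝ → ℝ → ℝ} {n : WithTop ℕ∞} (hK : IsPolyFun2 K) :
    ContDiff ℝ n ↿K := by
  obtain ⟨p, hp⟩ := hK
  have uncurry_eq : ↿K = fun q : ℝ × ℝ =>
      ∑ d ∈ p.support, p.coeff d * (q.1 ^ d 0 * q.2 ^ d 1) := by
    funext q
    exact (hp q.1 q.2).trans (by simp [MvPolynomial.eval_eq'])
  rw [uncurry_eq]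
  fun_prop

theorem controller_synthesis_inequality_general
    {a b c : ℝ → ℝ} {α : ℝ} (hα : 0 ≤ α)
    (ha : ContDiff ℝ 2 a) (hb : ContDiff ℝ 1 b) (hc : Continuous c)
    (haα : ∀ x ∈ Icc (0 : ℝ) 1, α ≤ a x)
    {ε1 : ℝ} (hε1 : 0 ≤ ε1)
    {M : ℝ → ℝ} {K1 K2 : ℝ → ℝ → ℝ}
    (hM : ContDiff ℝ 2 M) (hK1 : ContDiff ℝ 2 ↿K1)
    (hsym : ∀ x ξ : ℝ, K2 x ξ = K1 ξ x)
    (hMε : ∀ x ∈ Icc (0 : ℝ) 1, ε1 ≤ M x)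
    {T0 T4 : ℝ → ℝ} {T1 T2 : ℝ → ℝ → ℝ} {T3 T5 T6 : ℝ}
    (hT0 : ∀ x : ℝ, T0 x =
      (iteratedDeriv 2 a x - deriv b x) * M x + b x * deriv M x
        + a x * iteratedDeriv 2 M x + 2 * c x * M x - π ^ 2 / 2 * α * ε1
        + 2 * a x * deriv (fun t => K1 t x - K2 t x) x)
    (hT1 : ∀ x ξ : ℝ, T1 x ξ =
      a x * iteratedDeriv 2 (fun t => K1 t ξ) x + b x * deriv (fun t => K1 t ξ) x
        + a ξ * iteratedDeriv 2 (fun s => K1 x s) ξ + b ξ * deriv (fun s => K1 x s) ξ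
        + (c x + c ξ) * K1 x ξ)
    (hT2 : ∀ x ξ : ℝ, T2 x ξ = T1 ξ x)
    (hT3def : T3 = (deriv a 0 - b 0) * M 0 + a 0 * deriv M 0 - π ^ 2 / 2 * α * ε1)
    (hT4def : ∀ x : ℝ, T4 x = 2 * a 0 * deriv (fun t => K2 t x) 0 + π ^ 2 * α * ε1)
    (hT5 : T5 = (b 1 - deriv a 1) * M 1 + a 1 * deriv M 1)
    (hT6 : T6 = 2 * a 1 * M 1)
    (hT3 : T3 ≤ 0) (hT4 : ∀ x ∈ Icc (0 : ℝ) 1, T4 x = 0)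
    {O1 : ℝ → ℝ} (hO1 : IntervalIntegrable O1 volume 0 1) {O2 v Zc : ℝ} (hZc : Zc ≠ 0)
    {μ : ℝ} (hμdef : μ = -(T5 + T6 * M 1 / Zc))
    {z : ℝ → ℝ} (hz : ContDiff ℝ 2 z)
    (boundary_zero : deriv M 0 * z 0 + M 0 * deriv z 0
      + (∫ ξ in (0 : ℝ)..1, deriv (fun t => K2 t ξ) 0 * z ξ) = 0)
    (boundary_one : Zc * deriv z 1 = M 1 * z 1 - O2 * v) :
    2 * (∫ x in (0 : ℝ)..1,
          (secondOrderOp a b c (semisepOp M K1 K2 z) x + O1 x * v) * z x)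
      ≤ (∫ x in (0 : ℝ)..1, semisepOp T0 T1 T2 z x * z x)
        + 2 * v * (∫ x in (0 : ℝ)..1, O1 x * z x)
        - μ * (z 1) ^ 2 - T6 * O2 / Zc * z 1 * v := by
  obtain rfl : K2 = flip K1 := funext₂ hsym
  obtain rfl : T2 = flip T1 := funext₂ hT2
  obtain rfl : T1 = dualKernel a b c K1 := by
    funext x ξ
    rw [hT1, dualKernel, secondOrderOp, secondOrderOp]
    ring
  obtain rfl : T0 = fun x => dualMultiplier a b c M K1 x - π ^ 2 / 2 * (α * ε1) := by
    funext x
    rw [hT0, dualMultiplier, ((hasDerivAt_partialFst (hK1.of_le one_le_two) x x).fun_sub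
      (hasDerivAt_partialFst (contDiff_flip (hK1.of_le one_le_two)) x x)).deriv]
    ring
  have haM : ∀ x ∈ Icc (0 : ℝ) 1, α * ε1 ≤ a x * M x := fun x hx =>
    mul_le_mul (haα x hx) (hMε x hx) hε1 (hα.trans (haα x hx))
  have dual := dual_operator_inequality ha hb hc hM hK1 (mul_nonneg hα hε1) haM hz boundary_zero
  have T4_integral_eq_zero : ∫ ξ in (0 : ℝ)..1,
      (2 * a 0 * partialFst (flip K1) 0 ξ + π ^ 2 * (α * ε1)) * z ξ = 0 := by
    rw [intervalIntegral.integral_congr (g := fun _ => 0), intervalIntegral.integral_zero]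
    intro ξ hξ
    rw [uIcc_of_le zero_le_one] at hξ
    simp only [partialFst, ← mul_assoc, ← hT4def, hT4 ξ hξ, zero_mul]
  have T3_term_nonpos : T3 * z 0 ^ 2 ≤ 0 := mul_nonpos_of_nonpos_of_nonneg hT3 (sq_nonneg _)
  have feedback : T5 * z 1 ^ 2 + T6 * z 1 * deriv z 1 =
      -μ * z 1 ^ 2 - T6 * O2 / Zc * z 1 * v := by
    rw [hμdef]
    field_simp
    linear_combination T6 * z 1 * boundary_one
  have hLP := continuous_secondOrderOp_semisepOp_flip ha.continuous hb.continuous hc hM hK1 hz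
  rw [integral_add_mul_const_mul (hLP.intervalIntegrable 0 1) hO1 hz.continuous.continuousOn]
  rw [T4_integral_eq_zero] at dual
  subst hT3def hT5 hT6
  linarith

/-- Classical spatial form of Lemma 3 (controller synthesis). -/
theorem controller_synthesis_inequality
    (a b c : ℝ → ℝ) (α : ℝ) (hα : 0 < α)
    (ha : IsPolyFun a) (hb : IsPolyFun b) (hc : IsPolyFun c)
    (haα : ∀ x ∈ Set.Icc (0:ℝ) 1, α ≤ a x)
    (ε1 : ℝ) (hε1 : 0 < ε1)
    (M : ℝ → ℝ) (K1 K2 : ℝ → ℝ → ℝ)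
    (hMp : IsPolyFun M) (hK1p : IsPolyFun2 K1) (hK2p : IsPolyFun2 K2)
    (hsym : ∀ x ξ : ℝ, K2 x ξ = K1 ξ x)
    (hMε : ∀ x ∈ Set.Icc (0:ℝ) 1, ε1 ≤ M x)
    (T0 T4 : ℝ → ℝ) (T1 T2 : ℝ → ℝ → ℝ) (T3 T5 T6 : ℝ)
    (hT0 : ∀ x : ℝ, T0 x =
      (iteratedDeriv 2 a x - deriv b x) * M x + b x * deriv M x
        + a x * iteratedDeriv 2 M x + 2 * c x * M x - π ^ 2 / 2 * α * ε1
        + 2 * a x * deriv (fun t => K1 t x - K2 t x) x)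
    (hT1 : ∀ x ξ : ℝ, T1 x ξ =
      a x * iteratedDeriv 2 (fun t => K1 t ξ) x + b x * deriv (fun t => K1 t ξ) x
        + a ξ * iteratedDeriv 2 (fun s => K1 x s) ξ + b ξ * deriv (fun s => K1 x s) ξ
        + (c x + c ξ) * K1 x ξ)
    (hT2 : ∀ x ξ : ℝ, T2 x ξ = T1 ξ x)
    (hT3def : T3 = (deriv a 0 - b 0) * M 0 + a 0 * deriv M 0 - π ^ 2 / 2 * α * ε1)
    (hT4def : ∀ x : ℝ, T4 x = 2 * a 0 * deriv (fun t => K2 t x) 0 + π ^ 2 * α * ε1)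
    (hT5 : T5 = (b 1 - deriv a 1) * M 1 + a 1 * deriv M 1)
    (hT6 : T6 = 2 * a 1 * M 1)
    (hT3 : T3 ≤ 0) (hT4 : ∀ x ∈ Set.Icc (0:ℝ) 1, T4 x = 0)
    (O1 : ℝ → ℝ) (hO1 : Continuous O1) (O2 v Zc : ℝ) (hZc : Zc < 0)
    (μ : ℝ) (hμdef : μ = -(T5 + T6 * M 1 / Zc)) (hμ : 0 < μ) :
    ∀ z : ℝ → ℝ, ContDiff ℝ 2 z →
      (deriv M 0 * z 0 + M 0 * deriv z 0
        + (∫ ξ in (0:ℝ)..1, deriv (fun t => K2 t ξ) 0 * z ξ) = 0) →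
      deriv z 1 = M 1 / Zc * z 1 - O2 / Zc * v →
      2 * (∫ x in (0:ℝ)..1,
            (a x * iteratedDeriv 2 (semisepOp M K1 K2 z) x
              + b x * deriv (semisepOp M K1 K2 z) x
              + c x * semisepOp M K1 K2 z x
              + O1 x * v) * z x)
        ≤ (∫ x in (0:ℝ)..1,
              (T0 x * z x + (∫ ξ in (0:ℝ)..x, T1 x ξ * z ξ)
                + ∫ ξ in x..(1:ℝ), T2 x ξ * z ξ) * z x)
          + 2 * v * (∫ x in (0:ℝ)..1, O1 x * z x)
          - μ * (z 1) ^ 2 - T6 * O2 / Zc * z 1 * v := by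
  exact fun z hz boundary_zero boundary_one => controller_synthesis_inequality_general hα.le
    ha.contDiff hb.contDiff (hc.contDiff (n := 0)).continuous haα hε1.le hMp.contDiff
    hK1p.contDiff hsym hMε hT0 hT1 hT2 hT3def hT4def hT5 hT6 hT3 hT4 (hO1.intervalIntegrable 0 1)
    hZc.ne hμdef hz boundary_zero (by rw [boundary_one]; field_simp [hZc.ne])

end
end
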